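/- arXiv:math/0402282 — 2 statements merged into one kernel-verified Lean document; each statement's English description precedes it below -/
import Mathlib

section
/- Consider the metric g on ℝ^{2r+2} with coordinates (u_1,...,u_r,v_1,...,v_r,x,y) given by g(∂_x,∂_y)=1, g(∂_{u_i},∂_{v_j})=δ_{ij}, and g(∂_x,∂_x) = -2u_1v_2 - ... - 2u_{r-1}v_r - 2ψ(u_r) for ψ ∈ C^∞(ℝ). Then the only nonzero components of its curvature tensor R are R(∂_x,∂_{u_r},∂_{u_r},∂_x) = ψ''(u_r) and R(∂_x,∂_{u_i},∂_{v_{i+1}},∂_x) = 1 for 1 ≤ i ≤ r-1, and the only nonzero component of ∇R is ∇R(∂_x,∂_{u_r},∂_{u_r},∂_x;∂_{u_r}) = ψ'''(u_r). -/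
section CoordinateGeometry

variable {ι : Type*} [Fintype ι] [DecidableEq ι]

/-- The partial derivative `∂_a h` of a function `h` on `ℝ^ι`. -/
noncomputable def pd (a : ι) (h : (ι → ℝ) → ℝ) (z : ι → ℝ) : ℝ :=
  fderiv ℝ h z (Pi.single a 1)

/-- The Christoffel symbol of the first kind
`Γ_{abc} = (∂_a g_{bc} + ∂_b g_{ac} - ∂_c g_{ab})/2`. -/
noncomputable def christoffelFst (g : (ι → ℝ) → Matrix ι ι ℝ) (a b c : ι) (z : ι → ℝ) : ℝ :=
  (pd a (fun w => g w b c) z + pd b (fun w => g w a c) z - pd c (fun w => g w a b) z) / 2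

/-- The Christoffel symbol of the second kind `Γ_{ab}^c = Σ_d g^{cd} Γ_{abd}`. -/
noncomputable def christoffelSnd (g : (ι → ℝ) → Matrix ι ι ℝ) (a b c : ι) (z : ι → ℝ) : ℝ :=
  ∑ d, (g z)⁻¹ c d * christoffelFst g a b d z

/-- The curvature operator components: `curvU g a b c e` is the `e`-component of
`R(∂_a,∂_b)∂_c = (∇_{∂_a}∇_{∂_b} - ∇_{∂_b}∇_{∂_a})∂_c`. -/
noncomputable def curvU (g : (ι → ℝ) → Matrix ι ι ℝ) (a b c e : ι) (z : ι → ℝ) : ℝ :=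
  pd a (christoffelSnd g b c e) z - pd b (christoffelSnd g a c e) z
    + ∑ f, (christoffelSnd g b c f z * christoffelSnd g a f e z
          - christoffelSnd g a c f z * christoffelSnd g b f e z)

/-- The Riemann curvature tensor `R(∂_a,∂_b,∂_c,∂_d) = g(R(∂_a,∂_b)∂_c, ∂_d)`. -/
noncomputable def curv (g : (ι → ℝ) → Matrix ι ι ℝ) (a b c d : ι) (z : ι → ℝ) : ℝ :=
  ∑ e, curvU g a b c e z * g z e d

/-- The covariant derivative `∇R(∂_a,∂_b,∂_c,∂_d;∂_e)` of the curvature tensor. -/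
noncomputable def curvCov (g : (ι → ℝ) → Matrix ι ι ℝ) (a b c d e : ι) (z : ι → ℝ) : ℝ :=
  pd e (curv g a b c d) z
  - ∑ f, christoffelSnd g e a f z * curv g f b c d z
  - ∑ f, christoffelSnd g e b f z * curv g a f c d z
  - ∑ f, christoffelSnd g e c f z * curv g a b f d z
  - ∑ f, christoffelSnd g e d f z * curv g a b c f z

end CoordinateGeometry

/-- Coordinate index type for `ℝ^{2r+2}`: `Sum.inl i ↦ u_{i+1}`, `Sum.inr (Sum.inl i) ↦ v_{i+1}`,
`Sum.inr (Sum.inr (Sum.inl _)) ↦ x`, `Sum.inr (Sum.inr (Sum.inr _)) ↦ y`. -/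
abbrev Idx3 (r : ℕ) := Fin r ⊕ Fin r ⊕ Unit ⊕ Unit

/-- The metric `g_{3,r,ψ}`: `g(∂_x,∂_y) = 1`, `g(∂_{u_i},∂_{v_j}) = δ_{ij}`, and
`g(∂_x,∂_x) = -2u_1v_2 - ... - 2u_{r-1}v_r - 2ψ(u_r)`. -/
noncomputable def metric3 (r : ℕ) (ψ : ℝ → ℝ) :
    (Idx3 r → ℝ) → Matrix (Idx3 r) (Idx3 r) ℝ :=
  fun z => Matrix.of fun a b =>
    match a, b with
    | Sum.inl i, Sum.inr (Sum.inl j) => if i = j then 1 else 0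
    | Sum.inr (Sum.inl i), Sum.inl j => if i = j then 1 else 0
    | Sum.inr (Sum.inr (Sum.inl _)), Sum.inr (Sum.inr (Sum.inr _)) => 1
    | Sum.inr (Sum.inr (Sum.inr _)), Sum.inr (Sum.inr (Sum.inl _)) => 1
    | Sum.inr (Sum.inr (Sum.inl _)), Sum.inr (Sum.inr (Sum.inl _)) =>
        (-2) * (∑ i : Fin r, if h : i.1 + 1 < r
            then z (Sum.inl i) * z (Sum.inr (Sum.inl ⟨i.1 + 1, h⟩)) else 0)
        - 2 * (if h : 0 < r then ψ (z (Sum.inl ⟨r - 1, Nat.sub_lt h Nat.one_pos⟩)) else 0)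
    | _, _ => 0

/-!
The metric is a Kerr–Schild deformation `g = η + F ξ ⊗ ξ` of a constant metric `η`, where the
covector `ξ = dx` is null for `η` and `F = g(∂_x, ∂_x)` is constant along the vector `η⁻¹ ξ = ∂_y`.
These two conditions kill every contraction with `η⁻¹ ξ`, so `g⁻¹` acts as `η⁻¹` on all covectors
that occur. What survives of the products of Christoffel symbols is symmetric in the two slots in
which the curvature is antisymmetric. Hence `R` and `∇R` are linear in `F`: they are half the
Kulkarni–Nomizu products of `ξ ⊗ ξ` with the Hessian of `F` and with the derivative of that Hessian.
-/

open Matrix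

section PartialDerivatives

variable {ι : Type*} [DecidableEq ι] {z : ι → ℝ}

theorem pd_const (a : ι) (c : ℝ) : pd a (fun _ => c) z = 0 := by
  simp [pd]

theorem pd_coord (a i : ι) : pd a (fun w => w i) z = (Pi.single i 1 : ι → ℝ) a := by
  have hz : HasFDerivAt (fun w : ι → ℝ => w i) (ContinuousLinearMap.proj (R := ℝ) i) z :=
    (ContinuousLinearMap.proj (R := ℝ) (φ := fun _ : ι => ℝ) i).hasFDerivAt
  simp [pd, hz.fderiv, Pi.single_apply, eq_comm]

section Finite

variable [Finite ι] {f g : (ι → ℝ) → ℝ}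

theorem pd_add (a : ι) (hf : DifferentiableAt ℝ f z) (hg : DifferentiableAt ℝ g z) :
    pd a (fun w => f w + g w) z = pd a f z + pd a g z := by
  cases nonempty_fintype ι
  simp [pd, fderiv_fun_add hf hg]

theorem pd_sub (a : ι) (hf : DifferentiableAt ℝ f z) (hg : DifferentiableAt ℝ g z) :
    pd a (fun w => f w - g w) z = pd a f z - pd a g z := by
  cases nonempty_fintype ι
  simp [pd, fderiv_fun_sub hf hg]

theorem pd_mul (a : ι) (hf : DifferentiableAt ℝ f z) (hg : DifferentiableAt ℝ g z) :
    pd a (fun w => f w * g w) z = f z * pd a g z + pd a f z * g z := by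
  cases nonempty_fintype ι
  simp [pd, fderiv_fun_mul hf hg, mul_comm]

theorem pd_const_mul (a : ι) (c : ℝ) (hf : DifferentiableAt ℝ f z) :
    pd a (fun w => c * f w) z = c * pd a f z := by
  simp [pd_mul a (differentiableAt_const c) hf, pd_const]

theorem pd_mul_const (a : ι) (hf : DifferentiableAt ℝ f z) (c : ℝ) :
    pd a (fun w => f w * c) z = pd a f z * c := by
  simp [pd_mul a hf (differentiableAt_const c), pd_const]

theorem pd_sum {κ : Type*} (s : Finset κ) (a : ι) {f : κ → (ι → ℝ) → ℝ}
    (hf : ∀ i ∈ s, DifferentiableAt ℝ (f i) z) :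
    pd a (fun w => ∑ i ∈ s, f i w) z = ∑ i ∈ s, pd a (f i) z := by
  cases nonempty_fintype ι
  simp [pd, fderiv_fun_sum hf]

theorem pd_comp {φ : ℝ → ℝ} (a : ι) (hφ : DifferentiableAt ℝ φ (f z))
    (hf : DifferentiableAt ℝ f z) : pd a (fun w => φ (f w)) z = deriv φ (f z) * pd a f z := by
  cases nonempty_fintype ι
  have hφf : HasFDerivAt (fun w => φ (f w)) _ z := hφ.hasDerivAt.comp_hasFDerivAt z hf.hasFDerivAt
  simp [pd, hφf.fderiv]

end Finite

/-- The differential of `F` at `z`, as the covector of its partial derivatives. -/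
noncomputable def grad (F : (ι → ℝ) → ℝ) (z : ι → ℝ) : ι → ℝ :=
  fun a => pd a F z

/-- The Hessian matrix of `F` at `z`. -/
noncomputable def hess (F : (ι → ℝ) → ℝ) (z : ι → ℝ) : Matrix ι ι ℝ :=
  Matrix.of fun a b => pd a (pd b F) z

variable [Fintype ι] {F : (ι → ℝ) → ℝ}

theorem pd_const_dotProduct (a : ι) (u : ι → ℝ) {v : (ι → ℝ) → ι → ℝ}
    (hv : ∀ i, DifferentiableAt ℝ (fun w => v w i) z) :
    pd a (fun w => u ⬝ᵥ v w) z = u ⬝ᵥ fun i => pd a (fun w => v w i) z := by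
  simp only [dotProduct]
  rw [pd_sum _ _ fun i _ => (hv i).const_mul (u i)]
  exact Finset.sum_congr rfl fun i _ => pd_const_mul a (u i) (hv i)

theorem contDiff_pd {m n : WithTop ℕ∞} (a : ι) (hF : ContDiff ℝ n F) (hmn : m + 1 ≤ n) :
    ContDiff ℝ m (pd a F) :=
  (hF.fderiv_right hmn).clm_apply contDiff_const

theorem differentiable_pd (a : ι) (hF : ContDiff ℝ 2 F) : Differentiable ℝ (pd a F) :=
  (contDiff_pd a hF (m := 1) le_rfl).differentiable one_ne_zero

theorem differentiable_hess_apply (a b : ι) (hF : ContDiff ℝ 3 F) :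
    Differentiable ℝ fun w => hess F w a b :=
  differentiable_pd a (contDiff_pd b hF le_rfl)

theorem isSymm_hess (hF : ContDiff ℝ 2 F) : (hess F z).IsSymm := by
  have hess_apply (a b : ι) :
      hess F z a b = fderiv ℝ (fderiv ℝ F) z (Pi.single a 1) (Pi.single b 1) := by
    have hF' : DifferentiableAt ℝ (fderiv ℝ F) z :=
      (hF.fderiv_right (m := 1) le_rfl).differentiable one_ne_zero z
    change fderiv ℝ (fun w => fderiv ℝ F w (Pi.single b 1)) z (Pi.single a 1) = _
    rw [fderiv_clm_apply hF' (differentiableAt_const _)]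
    simp
  refine IsSymm.ext fun a b => ?_
  rw [hess_apply, hess_apply, (hF.contDiffAt.isSymmSndFDerivAt (by simp)).eq]

end PartialDerivatives

section LinearAlgebra

variable {ι : Type*}

theorem isSymm_vecMulVec_self (ξ : ι → ℝ) : (vecMulVec ξ ξ).IsSymm :=
  transpose_vecMulVec ξ ξ

theorem dotProduct_mulVec_comm [Fintype ι] {A : Matrix ι ι ℝ} (hA : A.IsSymm) (u v : ι → ℝ) :
    u ⬝ᵥ A *ᵥ v = v ⬝ᵥ A *ᵥ u := by
  rw [dotProduct_mulVec, ← mulVec_transpose, hA.eq, dotProduct_comm]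

/-- The Kulkarni–Nomizu product of two bilinear forms, with the sign convention
`(h ∧ k)(a,b,c,d) = h(a,c)k(b,d) + h(b,d)k(a,c) - h(a,d)k(b,c) - h(b,c)k(a,d)`. -/
def kulkarniNomizu (h k : Matrix ι ι ℝ) (a b c d : ι) : ℝ :=
  h a c * k b d + h b d * k a c - h a d * k b c - h b c * k a d

variable {h k : Matrix ι ι ℝ}

theorem kulkarniNomizu_swap (a b c d : ι) :
    kulkarniNomizu h k b a c d = -kulkarniNomizu h k a b c d := by
  unfold kulkarniNomizu
  ring

theorem kulkarniNomizu_pair_symm (hh : h.IsSymm) (hk : k.IsSymm) (a b c d : ι) :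
    kulkarniNomizu h k c d a b = kulkarniNomizu h k a b c d := by
  simp only [kulkarniNomizu, hh.apply a, hh.apply b, hk.apply a, hk.apply b]
  ring

section Differentiation

variable [Finite ι] {h : (ι → ℝ) → Matrix ι ι ℝ} {z : ι → ℝ}

theorem differentiableAt_kulkarniNomizu (hh : ∀ a b, DifferentiableAt ℝ (fun w => h w a b) z)
    (a b c d : ι) : DifferentiableAt ℝ (fun w => kulkarniNomizu (h w) k a b c d) z := by
  cases nonempty_fintype ι
  have hmul (i j : ι) (t : ℝ) : DifferentiableAt ℝ (fun w => h w i j * t) z :=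
    (hh i j).mul_const t
  exact (((hmul _ _ _).add (hmul _ _ _)).sub (hmul _ _ _)).sub (hmul _ _ _)

theorem pd_kulkarniNomizu [DecidableEq ι]
    (hh : ∀ a b, DifferentiableAt ℝ (fun w => h w a b) z) (a b c d e : ι) :
    pd e (fun w => kulkarniNomizu (h w) k a b c d) z
      = kulkarniNomizu (Matrix.of fun a b => pd e (fun w => h w a b) z) k a b c d := by
  cases nonempty_fintype ι
  simp (disch := fun_prop) only [kulkarniNomizu, pd_sub, pd_add, pd_mul_const, of_apply]

end Differentiation

end LinearAlgebra

section PlaneWave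

variable {ι : Type*}

/-- The Kerr–Schild deformation `η + F ξ ⊗ ξ` of a constant metric `η` by a constant covector
`ξ`. -/
def kerrSchild (η : Matrix ι ι ℝ) (ξ : ι → ℝ) (F : (ι → ℝ) → ℝ) (z : ι → ℝ) : Matrix ι ι ℝ :=
  η + F z • vecMulVec ξ ξ

variable {η : Matrix ι ι ℝ} {ξ : ι → ℝ} {F : (ι → ℝ) → ℝ}

theorem isSymm_kerrSchild (hη : η.IsSymm) (z : ι → ℝ) : (kerrSchild η ξ F z).IsSymm :=
  hη.add ((isSymm_vecMulVec_self ξ).smul (F z))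

theorem pd_kerrSchild_apply [Finite ι] [DecidableEq ι] {z : ι → ℝ}
    (hF : DifferentiableAt ℝ F z) (a b c : ι) :
    pd a (fun w => kerrSchild η ξ F w b c) z = pd a F z * (ξ b * ξ c) := by
  cases nonempty_fintype ι
  simp (disch := fun_prop) only [kerrSchild, Matrix.add_apply, Matrix.smul_apply, smul_eq_mul,
    vecMulVec_apply, pd_add, pd_const, zero_add, pd_mul_const]

theorem christoffelFst_kerrSchild [Finite ι] [DecidableEq ι] {z : ι → ℝ}
    (hF : DifferentiableAt ℝ F z) (a b : ι) :
    (fun c => christoffelFst (kerrSchild η ξ F) a b c z)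
      = ((grad F z a * ξ b + grad F z b * ξ a) / 2) • ξ - (ξ a * ξ b / 2) • grad F z := by
  funext c
  simp only [christoffelFst, pd_kerrSchild_apply hF, grad, Pi.sub_apply, Pi.smul_apply, smul_eq_mul]
  ring

variable [Fintype ι] [DecidableEq ι]

theorem kerrSchild_mulVec_inv_mulVec (hη : IsUnit η.det) (z : ι → ℝ) {v : ι → ℝ}
    (hv : ξ ⬝ᵥ η⁻¹ *ᵥ v = 0) : kerrSchild η ξ F z *ᵥ (η⁻¹ *ᵥ v) = v := by
  rw [kerrSchild, add_mulVec, smul_mulVec, vecMulVec_mulVec, hv, mulVec_mulVec,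
    mul_nonsing_inv η hη]
  simp

/-- The conditions under which `kerrSchild η ξ F` is a plane-fronted wave: `η` is a constant
pseudo-Riemannian metric, the covector `ξ` is null for `η`, and the profile `F` is constant along
the vector `η⁻¹ ξ` metrically dual to `ξ`. -/
structure IsPlaneWave (η : Matrix ι ι ℝ) (ξ : ι → ℝ) (F : (ι → ℝ) → ℝ) : Prop where
  isSymm : η.IsSymm
  isUnit_det : IsUnit η.det
  null : ξ ⬝ᵥ η⁻¹ *ᵥ ξ = 0
  dotProduct_grad : ∀ z, ξ ⬝ᵥ η⁻¹ *ᵥ grad F z = 0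

namespace IsPlaneWave

theorem inv_kerrSchild (h : IsPlaneWave η ξ F) (z : ι → ℝ) :
    (kerrSchild η ξ F z)⁻¹ = η⁻¹ - F z • vecMulVec (η⁻¹ *ᵥ ξ) (η⁻¹ *ᵥ ξ) := by
  have hξ : ξ ᵥ* η⁻¹ = η⁻¹ *ᵥ ξ := by rw [← mulVec_transpose, h.isSymm.inv.eq]
  refine inv_eq_right_inv ?_
  rw [mul_sub, mul_smul_comm, mul_vecMulVec, kerrSchild_mulVec_inv_mulVec h.isUnit_det z h.null,
    kerrSchild, add_mul, mul_nonsing_inv η h.isUnit_det, smul_mul_assoc, vecMulVec_mul, hξ,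
    add_sub_cancel_right]

theorem inv_kerrSchild_mulVec (h : IsPlaneWave η ξ F) (z : ι → ℝ) {v : ι → ℝ}
    (hv : ξ ⬝ᵥ η⁻¹ *ᵥ v = 0) : (kerrSchild η ξ F z)⁻¹ *ᵥ v = η⁻¹ *ᵥ v := by
  rw [h.inv_kerrSchild, sub_mulVec, smul_mulVec, vecMulVec_mulVec, dotProduct_comm,
    dotProduct_mulVec_comm h.isSymm.inv, hv]
  simp

theorem sum_inv_mulVec_mul_kerrSchild (h : IsPlaneWave η ξ F) (z : ι → ℝ) {v : ι → ℝ}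
    (hv : ξ ⬝ᵥ η⁻¹ *ᵥ v = 0) (d : ι) : ∑ e, (η⁻¹ *ᵥ v) e * kerrSchild η ξ F z e d = v d := by
  simpa only [mulVec, dotProduct, (isSymm_kerrSchild h.isSymm z).apply, mul_comm] using
    congrFun (kerrSchild_mulVec_inv_mulVec (F := F) h.isUnit_det z hv) d

theorem dotProduct_hess (h : IsPlaneWave η ξ F) (hF : ContDiff ℝ 2 F) (a : ι) (z : ι → ℝ) :
    ξ ⬝ᵥ η⁻¹ *ᵥ (hess F z).row a = 0 := by
  have hpd : pd a (fun w => ξ ⬝ᵥ η⁻¹ *ᵥ grad F w) z = 0 := by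
    simp only [h.dotProduct_grad, pd_const]
  simp only [dotProduct_mulVec] at hpd ⊢
  rwa [pd_const_dotProduct (v := grad F) a _ fun i => differentiable_pd i hF z] at hpd

theorem christoffelSnd_kerrSchild (h : IsPlaneWave η ξ F) {z : ι → ℝ}
    (hF : DifferentiableAt ℝ F z) (a b c : ι) :
    christoffelSnd (kerrSchild η ξ F) a b c z
      = (grad F z a * ξ b + grad F z b * ξ a) / 2 * (η⁻¹ *ᵥ ξ) c
        - ξ a * ξ b / 2 * (η⁻¹ *ᵥ grad F z) c := by
  change ((kerrSchild η ξ F z)⁻¹ *ᵥ fun d => christoffelFst (kerrSchild η ξ F) a b d z) c = _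
  rw [christoffelFst_kerrSchild hF, mulVec_sub, mulVec_smul, mulVec_smul,
    h.inv_kerrSchild_mulVec z h.null, h.inv_kerrSchild_mulVec z (h.dotProduct_grad z)]
  rfl

theorem sum_christoffelSnd_mul (h : IsPlaneWave η ξ F) {z : ι → ℝ} (hF : DifferentiableAt ℝ F z)
    {v : ι → ℝ} (hv : ξ ⬝ᵥ η⁻¹ *ᵥ v = 0) (a b : ι) :
    ∑ f, christoffelSnd (kerrSchild η ξ F) a b f z * v f
      = -(ξ a * ξ b / 2) * (grad F z ⬝ᵥ η⁻¹ *ᵥ v) := by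
  have sum_inv_mulVec (u : ι → ℝ) : ∑ f, (η⁻¹ *ᵥ u) f * v f = u ⬝ᵥ η⁻¹ *ᵥ v :=
    (dotProduct_comm _ v).trans (dotProduct_mulVec_comm h.isSymm.inv v u)
  simp only [h.christoffelSnd_kerrSchild hF, sub_mul, mul_assoc, Finset.sum_sub_distrib,
    ← Finset.mul_sum, sum_inv_mulVec, hv]
  ring

/- The sum is symmetric in `a` and `b`, so the quadratic terms of the curvature cancel. -/
theorem sum_christoffelSnd_mul_christoffelSnd (h : IsPlaneWave η ξ F) {z : ι → ℝ}
    (hF : DifferentiableAt ℝ F z) (a b c e : ι) :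
    ∑ f, christoffelSnd (kerrSchild η ξ F) b c f z * christoffelSnd (kerrSchild η ξ F) a f e z
      = -(ξ a * ξ b * ξ c * (η⁻¹ *ᵥ ξ) e * (grad F z ⬝ᵥ η⁻¹ *ᵥ grad F z)) / 4 := by
  set α := (grad F z a * (η⁻¹ *ᵥ ξ) e - ξ a * (η⁻¹ *ᵥ grad F z) e) / 2
  set β := ξ a * (η⁻¹ *ᵥ ξ) e / 2 with hβ
  have hΓ : (fun f => christoffelSnd (kerrSchild η ξ F) a f e z) = α • ξ + β • grad F z := by
    funext f
    simp only [h.christoffelSnd_kerrSchild hF, Pi.add_apply, Pi.smul_apply, smul_eq_mul, α, β]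
    ring
  have hξ : ξ ⬝ᵥ η⁻¹ *ᵥ (α • ξ + β • grad F z) = 0 := by
    simp only [mulVec_add, mulVec_smul, dotProduct_add, dotProduct_smul, h.null,
      h.dotProduct_grad, smul_zero, add_zero]
  have hgrad : grad F z ⬝ᵥ η⁻¹ *ᵥ (α • ξ + β • grad F z)
      = β * (grad F z ⬝ᵥ η⁻¹ *ᵥ grad F z) := by
    simp only [mulVec_add, mulVec_smul, dotProduct_add, dotProduct_smul, smul_eq_mul,
      dotProduct_mulVec_comm h.isSymm.inv (grad F z) ξ, h.dotProduct_grad, mul_zero, zero_add]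
  have hsum := h.sum_christoffelSnd_mul hF hξ b c
  rw [hgrad] at hsum
  simp only [← hΓ] at hsum
  rw [hsum, hβ]
  ring

theorem pd_christoffelSnd_kerrSchild (h : IsPlaneWave η ξ F) (hF : ContDiff ℝ 2 F)
    (a b c e : ι) (z : ι → ℝ) :
    pd a (christoffelSnd (kerrSchild η ξ F) b c e) z
      = (hess F z a b * ξ c + hess F z a c * ξ b) / 2 * (η⁻¹ *ᵥ ξ) e
        - ξ b * ξ c / 2 * (η⁻¹ *ᵥ (hess F z).row a) e := by
  have hΓ : christoffelSnd (kerrSchild η ξ F) b c e = fun z =>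
      (pd b F z * ξ c + pd c F z * ξ b) * ((η⁻¹ *ᵥ ξ) e / 2)
        - ξ b * ξ c / 2 * (η⁻¹ *ᵥ grad F z) e := by
    funext z
    rw [h.christoffelSnd_kerrSchild (hF.differentiable two_ne_zero z), grad, grad]
    ring
  have hd (i : ι) : Differentiable ℝ (pd i F) := differentiable_pd i hF
  have hmulVec : pd a (fun w => (η⁻¹ *ᵥ grad F w) e) z = (η⁻¹ *ᵥ (hess F z).row a) e :=
    pd_const_dotProduct a _ fun i => hd i z
  have hdm : Differentiable ℝ fun w => (η⁻¹ *ᵥ grad F w) e := by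
    simp only [mulVec, dotProduct, grad]
    fun_prop
  have hpd (i : ι) : pd a (pd i F) z = hess F z a i := rfl
  rw [hΓ, pd_sub a (by fun_prop) ((hdm z).const_mul _), pd_const_mul a _ (hdm z), hmulVec]
  simp (disch := fun_prop) only [pd_add, pd_mul_const, hpd]
  ring

theorem curvU_kerrSchild (h : IsPlaneWave η ξ F) (hF : ContDiff ℝ 2 F) (a b c e : ι)
    (z : ι → ℝ) :
    curvU (kerrSchild η ξ F) a b c e z
      = (η⁻¹ *ᵥ (((hess F z a c * ξ b - hess F z b c * ξ a) / 2) • ξ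
          + (ξ a * ξ c / 2) • (hess F z).row b - (ξ b * ξ c / 2) • (hess F z).row a)) e := by
  have hd : DifferentiableAt ℝ F z := hF.differentiable two_ne_zero z
  simp only [curvU, h.pd_christoffelSnd_kerrSchild hF, Finset.sum_sub_distrib,
    h.sum_christoffelSnd_mul_christoffelSnd hd, mulVec_add, mulVec_sub, mulVec_smul, Pi.add_apply,
    Pi.sub_apply, Pi.smul_apply, smul_eq_mul, (isSymm_hess hF).apply a b]
  ring

theorem curv_kerrSchild (h : IsPlaneWave η ξ F) (hF : ContDiff ℝ 2 F) (a b c d : ι)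
    (z : ι → ℝ) :
    curv (kerrSchild η ξ F) a b c d z
      = 1 / 2 * kulkarniNomizu (hess F z) (vecMulVec ξ ξ) a b c d := by
  simp only [curv, h.curvU_kerrSchild hF]
  rw [h.sum_inv_mulVec_mul_kerrSchild]
  · simp only [kulkarniNomizu, vecMulVec_apply, Pi.add_apply, Pi.sub_apply, Pi.smul_apply,
      smul_eq_mul, row_apply]
    ring
  · simp only [mulVec_add, mulVec_sub, mulVec_smul, dotProduct_add, dotProduct_sub,
      dotProduct_smul, h.null, h.dotProduct_hess hF, smul_zero, add_zero, sub_zero]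

theorem sum_christoffelSnd_mul_kulkarniNomizu (h : IsPlaneWave η ξ F) {z : ι → ℝ}
    (hF : ContDiff ℝ 2 F) (e a b c d : ι) :
    ∑ f, christoffelSnd (kerrSchild η ξ F) e a f z *
        kulkarniNomizu (hess F z) (vecMulVec ξ ξ) f b c d
      = -(ξ e * ξ a * ξ b / 2) * (ξ d * (grad F z ⬝ᵥ η⁻¹ *ᵥ (hess F z).row c)
          - ξ c * (grad F z ⬝ᵥ η⁻¹ *ᵥ (hess F z).row d)) := by
  have hR : (fun f => kulkarniNomizu (hess F z) (vecMulVec ξ ξ) f b c d)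
      = (ξ b * ξ d) • (hess F z).row c - (ξ b * ξ c) • (hess F z).row d
        + (hess F z b d * ξ c - hess F z b c * ξ d) • ξ := by
    funext f
    simp only [kulkarniNomizu, vecMulVec_apply, Pi.add_apply, Pi.sub_apply, Pi.smul_apply,
      smul_eq_mul, row_apply, (isSymm_hess hF).apply f]
    ring
  have hd : DifferentiableAt ℝ F z := hF.differentiable two_ne_zero z
  have hξ : ξ ⬝ᵥ η⁻¹ *ᵥ (fun f => kulkarniNomizu (hess F z) (vecMulVec ξ ξ) f b c d) = 0 := by
    simp only [hR, mulVec_add, mulVec_sub, mulVec_smul, dotProduct_add, dotProduct_sub,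
      dotProduct_smul, h.null, h.dotProduct_hess hF, smul_zero, add_zero, sub_zero]
  rw [h.sum_christoffelSnd_mul hd hξ, hR]
  simp only [mulVec_add, mulVec_sub, mulVec_smul, dotProduct_add, dotProduct_sub, dotProduct_smul,
    smul_eq_mul, dotProduct_mulVec_comm h.isSymm.inv (grad F z) ξ, h.dotProduct_grad]
  ring

/- The first sum is symmetric in `a` and `b`, in which the curvature is antisymmetric. -/
theorem sum_christoffelSnd_mul_kulkarniNomizu_add (h : IsPlaneWave η ξ F) (hF : ContDiff ℝ 2 F)
    (a b c d e : ι) (z : ι → ℝ) :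
    ∑ f, christoffelSnd (kerrSchild η ξ F) e a f z *
          kulkarniNomizu (hess F z) (vecMulVec ξ ξ) f b c d
        + ∑ f, christoffelSnd (kerrSchild η ξ F) e b f z *
          kulkarniNomizu (hess F z) (vecMulVec ξ ξ) a f c d = 0 := by
  simp only [kulkarniNomizu_swap _ a, mul_neg, Finset.sum_neg_distrib,
    h.sum_christoffelSnd_mul_kulkarniNomizu hF]
  ring

theorem curvCov_kerrSchild (h : IsPlaneWave η ξ F) (hF : ContDiff ℝ 3 F) (a b c d e : ι)
    (z : ι → ℝ) :
    curvCov (kerrSchild η ξ F) a b c d e z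
      = 1 / 2 * kulkarniNomizu (Matrix.of fun a b => pd e (fun w => hess F w a b) z)
          (vecMulVec ξ ξ) a b c d := by
  have hF₂ : ContDiff ℝ 2 F := hF.of_le (by norm_num)
  have hpair : ∀ a b c d, kulkarniNomizu (hess F z) (vecMulVec ξ ξ) a b c d
      = kulkarniNomizu (hess F z) (vecMulVec ξ ξ) c d a b := fun a b c d =>
    kulkarniNomizu_pair_symm (isSymm_hess hF₂) (isSymm_vecMulVec_self ξ) c d a b
  have hab := h.sum_christoffelSnd_mul_kulkarniNomizu_add hF₂ a b c d e z
  have hcd := h.sum_christoffelSnd_mul_kulkarniNomizu_add hF₂ c d a b e z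
  simp only [hpair _ _ a b] at hcd
  have hpd : pd e (curv (kerrSchild η ξ F) a b c d) z
      = 1 / 2 * kulkarniNomizu (Matrix.of fun a b => pd e (fun w => hess F w a b) z)
          (vecMulVec ξ ξ) a b c d := by
    have hcurv : curv (kerrSchild η ξ F) a b c d
        = fun w => 1 / 2 * kulkarniNomizu (hess F w) (vecMulVec ξ ξ) a b c d :=
      funext (h.curv_kerrSchild hF₂ a b c d)
    have hhess (i j : ι) : DifferentiableAt ℝ (fun w => hess F w i j) z :=
      differentiable_hess_apply i j hF z
    rw [hcurv, pd_const_mul e _ (differentiableAt_kulkarniNomizu hhess a b c d),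
      pd_kulkarniNomizu hhess]
  simp only [curvCov, hpd, h.curv_kerrSchild hF₂, mul_left_comm _ (1 / 2 : ℝ), ← Finset.mul_sum]
  linarith

end IsPlaneWave

end PlaneWave

section WaveProfile

variable {ι : Type*} [Fintype ι] {ψ : ℝ → ℝ} {z : ι → ℝ}

/-- The profile `-2 z·Bz - 2 ψ(z_k)` of a wave, for a square matrix `B` and a coordinate `k`. -/
def waveProfile (B : Matrix ι ι ℝ) (k : ι) (ψ : ℝ → ℝ) (z : ι → ℝ) : ℝ :=
  -2 * (z ⬝ᵥ B *ᵥ z) - 2 * ψ (z k)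

theorem contDiff_dotProduct_mulVec_self (B : Matrix ι ι ℝ) {n : WithTop ℕ∞} :
    ContDiff ℝ n fun w : ι → ℝ => w ⬝ᵥ B *ᵥ w := by
  simp only [dotProduct, mulVec]
  fun_prop

theorem contDiff_waveProfile (B : Matrix ι ι ℝ) (k : ι) {n : WithTop ℕ∞} (hψ : ContDiff ℝ n ψ) :
    ContDiff ℝ n (waveProfile B k ψ) :=
  (contDiff_const.mul (contDiff_dotProduct_mulVec_self B)).sub
    (contDiff_const.mul (hψ.comp (contDiff_apply ℝ ℝ k)))

theorem differentiable_mulVec_apply (B : Matrix ι ι ℝ) (i : ι) :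
    Differentiable ℝ fun w : ι → ℝ => (B *ᵥ w) i := by
  simp only [mulVec, dotProduct]
  fun_prop

variable [DecidableEq ι]

theorem pd_mulVec_apply (B : Matrix ι ι ℝ) (a i : ι) :
    pd a (fun w => (B *ᵥ w) i) z = B i a := by
  refine (pd_const_dotProduct a (B.row i) (v := id) fun j => differentiableAt_apply j z).trans ?_
  simp [pd_coord, dotProduct, Pi.single_apply]

theorem pd_dotProduct_mulVec_self (B : Matrix ι ι ℝ) (a : ι) :
    pd a (fun w => w ⬝ᵥ B *ᵥ w) z = ((B + Bᵀ) *ᵥ z) a := by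
  have hcoord (i : ι) : DifferentiableAt ℝ (fun w : ι → ℝ => w i) z := differentiableAt_apply i z
  have hB (i : ι) : DifferentiableAt ℝ (fun w : ι → ℝ => (B *ᵥ w) i) z :=
    differentiable_mulVec_apply B i z
  calc pd a (fun w => ∑ i, w i * (B *ᵥ w) i) z
      = ∑ i, (z i * B i a + (Pi.single i 1 : ι → ℝ) a * (B *ᵥ z) i) := by
        simp only [pd_sum _ a fun i _ => (hcoord i).fun_mul (hB i),
          pd_mul a (hcoord _) (hB _), pd_mulVec_apply, pd_coord]
    _ = (Bᵀ *ᵥ z) a + (B *ᵥ z) a := by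
        simp [Finset.sum_add_distrib, mulVec_transpose, vecMul, dotProduct, Pi.single_apply]
    _ = ((B + Bᵀ) *ᵥ z) a := by rw [add_mulVec, Pi.add_apply, add_comm]

theorem grad_waveProfile (B : Matrix ι ι ℝ) (k : ι) (hψ : Differentiable ℝ ψ) :
    grad (waveProfile B k ψ) z
      = (-2 : ℝ) • ((B + Bᵀ) *ᵥ z + deriv ψ (z k) • Pi.single k 1) := by
  have hB : DifferentiableAt ℝ (fun w : ι → ℝ => w ⬝ᵥ B *ᵥ w) z :=
    (contDiff_dotProduct_mulVec_self B).differentiable one_ne_zero z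
  funext a
  change pd a (fun w => -2 * (w ⬝ᵥ B *ᵥ w) - 2 * ψ (w k)) z = _
  rw [pd_sub a (by fun_prop) (by fun_prop), pd_const_mul a _ hB, pd_const_mul a _ (by fun_prop),
    pd_comp a (hψ _) (by fun_prop), pd_dotProduct_mulVec_self, pd_coord]
  simp only [Pi.smul_apply, Pi.add_apply, smul_eq_mul]
  ring

theorem hess_waveProfile (B : Matrix ι ι ℝ) (k : ι) (hψ : ContDiff ℝ 2 ψ) :
    hess (waveProfile B k ψ) z
      = (-2 : ℝ) • (B + Bᵀ + Matrix.single k k (deriv (deriv ψ) (z k))) := by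
  have hψ' : Differentiable ℝ (deriv ψ) := hψ.differentiable_deriv_two
  have hk : DifferentiableAt ℝ (fun w : ι → ℝ => deriv ψ (w k)) z := by fun_prop
  ext a b
  have hgrad : pd b (waveProfile B k ψ) = fun w =>
      -2 * (((B + Bᵀ) *ᵥ w) b + deriv ψ (w k) * (Pi.single k 1 : ι → ℝ) b) :=
    funext fun w => congrFun (grad_waveProfile B k (hψ.differentiable two_ne_zero)) b
  have hB : DifferentiableAt ℝ (fun w : ι → ℝ => ((B + Bᵀ) *ᵥ w) b) z :=
    differentiable_mulVec_apply _ b z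
  have hBsymm : (B + Bᵀ) b a = (B + Bᵀ) a b := by
    rw [Matrix.add_apply, Matrix.add_apply, transpose_apply, transpose_apply, add_comm]
  rw [hess, of_apply, hgrad, pd_const_mul a _ (hB.fun_add (hk.mul_const _)),
    pd_add a hB (hk.mul_const _), pd_mul_const a hk, pd_mulVec_apply,
    pd_comp a (hψ' _) (differentiableAt_apply k z), pd_coord, hBsymm, Matrix.smul_apply,
    Matrix.add_apply _ (Matrix.single _ _ _), smul_eq_mul]
  by_cases ha : a = k <;> by_cases hb : b = k <;> simp [ha, hb, eq_comm (a := k)]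

theorem pd_hess_waveProfile_apply (B : Matrix ι ι ℝ) (k a b e : ι) (hψ : ContDiff ℝ 3 ψ) :
    pd e (fun w => hess (waveProfile B k ψ) w a b) z
      = -2 * if a = k ∧ b = k ∧ e = k then deriv (deriv (deriv ψ)) (z k) else 0 := by
  have hψ'' : Differentiable ℝ (deriv (deriv ψ)) := (hψ.deriv' (n := 2)).differentiable_deriv_two
  have hk : DifferentiableAt ℝ (fun w : ι → ℝ => deriv (deriv ψ) (w k)) z := by fun_prop
  simp only [hess_waveProfile B k (hψ.of_le (by norm_num)), Matrix.smul_apply, Matrix.add_apply,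
    smul_eq_mul, Matrix.single_apply, eq_comm (a := k)]
  by_cases hab : a = k ∧ b = k
  · simp only [hab, and_self, if_true, true_and]
    rw [pd_const_mul e _ (hk.const_add _), pd_add e (differentiableAt_const _) hk, pd_const,
      pd_comp e (hψ'' _) (differentiableAt_apply k z), pd_coord]
    simp [Pi.single_apply]
  · simp only [hab, if_false, pd_const]
    simp [← and_assoc, hab]

end WaveProfile

section Metric3

variable {r : ℕ}

/-- The permutation of the coordinates exchanging `u_i` with `v_i` and `x` with `y`; its matrix is
the flat part of `metric3`. -/
def idxSwap (r : ℕ) : Equiv.Perm (Idx3 r) :=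
  (Equiv.sumAssoc _ _ _).permCongr ((Equiv.sumComm _ _).sumCongr (Equiv.sumComm _ _))

/-- The index of the coordinate `x`. -/
abbrev idxX (r : ℕ) : Idx3 r := Sum.inr (Sum.inr (Sum.inl ()))

/-- The matrix of the bilinear form `u_1 v_2 + ... + u_{r-1} v_r`. -/
def shiftForm (r : ℕ) : Matrix (Idx3 r) (Idx3 r) ℝ :=
  Matrix.of fun
    | Sum.inl i, Sum.inr (Sum.inl j) => if j.1 = i.1 + 1 then 1 else 0
    | _, _ => 0

theorem dotProduct_shiftForm_mulVec_self (z : Idx3 r → ℝ) :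
    z ⬝ᵥ shiftForm r *ᵥ z = ∑ i : Fin r, if h : i.1 + 1 < r
      then z (Sum.inl i) * z (Sum.inr (Sum.inl ⟨i.1 + 1, h⟩)) else 0 := by
  have hsum (i : Fin r) : (∑ j : Fin r, if j.1 = i.1 + 1 then z (Sum.inr (Sum.inl j)) else 0)
      = if h : i.1 + 1 < r then z (Sum.inr (Sum.inl ⟨i.1 + 1, h⟩)) else 0 := by
    split_ifs with h
    · rw [Fintype.sum_eq_single ⟨i.1 + 1, h⟩ fun j hj => if_neg (Fin.val_ne_of_ne hj)]
      exact if_pos rfl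
    · exact Finset.sum_eq_zero fun j _ => if_neg (by omega)
  simp [dotProduct, mulVec, shiftForm, hsum, mul_dite]

theorem inv_idxSwap : (idxSwap r)⁻¹ = idxSwap r := by
  ext (i | i | _ | _) <;> rfl

theorem isSymm_permMatrix_idxSwap : ((idxSwap r).permMatrix ℝ).IsSymm := by
  rw [Matrix.IsSymm, transpose_permMatrix, inv_idxSwap]

theorem permMatrix_idxSwap_mul_self :
    (idxSwap r).permMatrix ℝ * (idxSwap r).permMatrix ℝ = 1 := by
  rw [← permMatrix_mul, mul_eq_one_iff_eq_inv.2 inv_idxSwap.symm, permMatrix_one]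

theorem inv_permMatrix_idxSwap : ((idxSwap r).permMatrix ℝ)⁻¹ = (idxSwap r).permMatrix ℝ :=
  inv_eq_right_inv permMatrix_idxSwap_mul_self

theorem metric3_eq_kerrSchild (hr : 0 < r) (ψ : ℝ → ℝ) :
    metric3 r ψ = kerrSchild ((idxSwap r).permMatrix ℝ) (Pi.single (idxX r) 1)
      (waveProfile (shiftForm r) (Sum.inl ⟨r - 1, Nat.sub_lt hr Nat.one_pos⟩) ψ) := by
  funext z
  ext (i | i | _ | _) (j | j | _ | _) <;>
    simp [metric3, kerrSchild, idxSwap, waveProfile, hr, vecMulVec_apply,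
      dotProduct_shiftForm_mulVec_self, Equiv.Perm.permMatrix, PEquiv.toMatrix_apply, eq_comm]

theorem isPlaneWave_metric3 (k : Fin r) {ψ : ℝ → ℝ} (hψ : Differentiable ℝ ψ) :
    IsPlaneWave ((idxSwap r).permMatrix ℝ) (Pi.single (idxX r) 1)
      (waveProfile (shiftForm r) (Sum.inl k) ψ) where
  isSymm := isSymm_permMatrix_idxSwap
  isUnit_det := isUnit_det_of_left_inverse permMatrix_idxSwap_mul_self
  null := by
    rw [inv_permMatrix_idxSwap, permMatrix_mulVec]
    simp [idxSwap]
  dotProduct_grad z := by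
    rw [inv_permMatrix_idxSwap, permMatrix_mulVec, grad_waveProfile _ _ hψ]
    simp [idxSwap, shiftForm, mulVec, dotProduct]

end Metric3

theorem stmt14_general (r : ℕ) (hr : 0 < r) (ψ : ℝ → ℝ) (hψ : ContDiff ℝ 3 ψ) :
    ∀ z : Idx3 r → ℝ,
      let ur : Idx3 r := Sum.inl ⟨r - 1, Nat.sub_lt hr Nat.one_pos⟩
      let S : Matrix (Idx3 r) (Idx3 r) ℝ :=
        shiftForm r + (shiftForm r)ᵀ + Matrix.single ur ur (deriv (deriv ψ) (z ur))
      let T : Idx3 r → Idx3 r → Idx3 r → ℝ := fun e f h =>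
        if e = ur ∧ f = ur ∧ h = ur then deriv (deriv (deriv ψ)) (z ur) else 0
      let Xi : Idx3 r → ℝ := Pi.single (idxX r) 1
      (∀ a b c d : Idx3 r, curv (metric3 r ψ) a b c d z =
          S b c * Xi a * Xi d - S b d * Xi a * Xi c
          - S a c * Xi b * Xi d + S a d * Xi b * Xi c) ∧
      (∀ a b c d e : Idx3 r, curvCov (metric3 r ψ) a b c d e z =
          T b c e * Xi a * Xi d - T b d e * Xi a * Xi c
          - T a c e * Xi b * Xi d + T a d e * Xi b * Xi c) := by
  intro z ur S T Xi
  have hwave : IsPlaneWave _ Xi (waveProfile (shiftForm r) ur ψ) :=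
    isPlaneWave_metric3 _ (hψ.differentiable three_ne_zero)
  have hF : ContDiff ℝ 3 (waveProfile (shiftForm r) ur ψ) := contDiff_waveProfile _ _ hψ
  have h₂₃ : (2 : WithTop ℕ∞) ≤ 3 := by norm_num
  have hS : hess (waveProfile (shiftForm r) ur ψ) z = (-2 : ℝ) • S :=
    hess_waveProfile _ _ (hψ.of_le h₂₃)
  have hT (e f h : Idx3 r) :
      pd h (fun w => hess (waveProfile (shiftForm r) ur ψ) w e f) z = -2 * T e f h :=
    pd_hess_waveProfile_apply _ _ _ _ _ hψ
  rw [metric3_eq_kerrSchild hr]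
  refine ⟨fun a b c d => ?_, fun a b c d e => ?_⟩
  · rw [hwave.curv_kerrSchild (hF.of_le h₂₃)]
    simp only [kulkarniNomizu, hS, Matrix.smul_apply, smul_eq_mul, vecMulVec_apply]
    ring
  · rw [hwave.curvCov_kerrSchild hF]
    simp only [kulkarniNomizu, of_apply, hT, vecMulVec_apply]
    ring

/-- Theorem 1.5 (3): the only nonzero components of `R` and `∇R` for `g_{3,r,ψ}` (up to the
`ℤ₂` curvature symmetries) are `R(∂_x,∂_{u_r},∂_{u_r},∂_x) = ψ''(u_r)`,
`R(∂_x,∂_{u_i},∂_{v_{i+1}},∂_x) = 1` for `1 ≤ i ≤ r-1`, and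
`∇R(∂_x,∂_{u_r},∂_{u_r},∂_x;∂_{u_r}) = ψ'''(u_r)`.  This is expressed by giving the full
tensors: `R(a,b,c,d) = S(b,c)X_aX_d - S(b,d)X_aX_c - S(a,c)X_bX_d + S(a,d)X_bX_c` where `S`
has components `S(∂_{u_r},∂_{u_r}) = ψ''(u_r)`, `S(∂_{u_i},∂_{v_{i+1}}) = 1`, and similarly
for `∇R` with `T(b,c,e) = ψ'''(u_r)` iff `b = c = e = ∂_{u_r}`. -/
theorem stmt14 (r : ℕ) (hr : 2 ≤ r) (ψ : ℝ → ℝ) (hψ : ContDiff ℝ (⊤ : ℕ∞) ψ) :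
    ∀ z : Idx3 r → ℝ,
      let ur : Idx3 r := Sum.inl ⟨r - 1, by omega⟩
      let S : Idx3 r → Idx3 r → ℝ := fun e f =>
        match e, f with
        | Sum.inl i, Sum.inl j =>
            if i.1 = r - 1 ∧ j.1 = r - 1 then deriv (deriv ψ) (z ur) else 0
        | Sum.inl i, Sum.inr (Sum.inl j) => if j.1 = i.1 + 1 then 1 else 0
        | Sum.inr (Sum.inl j), Sum.inl i => if j.1 = i.1 + 1 then 1 else 0
        | _, _ => 0
      let T : Idx3 r → Idx3 r → Idx3 r → ℝ := fun e f h =>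
        if e = ur ∧ f = ur ∧ h = ur then deriv (deriv (deriv ψ)) (z ur) else 0
      let Xi : Idx3 r → ℝ := fun e =>
        match e with | Sum.inr (Sum.inr (Sum.inl _)) => 1 | _ => 0
      (∀ a b c d : Idx3 r, curv (metric3 r ψ) a b c d z =
          S b c * Xi a * Xi d - S b d * Xi a * Xi c
          - S a c * Xi b * Xi d + S a d * Xi b * Xi c) ∧
      (∀ a b c d e : Idx3 r, curvCov (metric3 r ψ) a b c d e z =
          T b c e * Xi a * Xi d - T b d e * Xi a * Xi c
          - T a c e * Xi b * Xi d + T a d e * Xi b * Xi c) := by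
  intro z ur S T Xi
  have hS : shiftForm r + (shiftForm r)ᵀ + single ur ur (deriv (deriv ψ) (z ur)) = S := by
    ext (i | i | _ | _) (j | j | _ | _) <;>
      simp [S, ur, shiftForm, single_apply, Fin.ext_iff, eq_comm]
  have hXi : Pi.single (idxX r) 1 = Xi := by
    funext e
    obtain i | i | _ | _ := e <;> simp [Xi]
  exact hS ▸ hXi ▸ stmt14_general r (by omega) ψ (contDiff_infty.1 hψ 3) z
end

section
/- Let M be a pseudo-Riemannian manifold with ∇R = 0 such that exp_P : T_PM → M is a diffeomorphism for every P ∈ M. Then for any two points P, Q ∈ M there exists an isometry of M taking P to Q (the geodesic symmetry about the midpoint of the geodesic from P to Q); hence M is a homogeneous space. -/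
/-!
If `∇R = 0`, a Jacobi field `J` along a geodesic `γ` satisfies `∇²J = R(γ', J) γ'` with parallel
coefficients, so its iterated covariant derivatives are obtained by applying the parallel
operator `R(γ', ·) γ'` to `J` and `∇J`. When `J 0 = 0`, those of even order vanish at `0`. For two
such fields, all derivatives of odd order of `t ↦ g(J₁ t, J₂ t)` vanish at `0`, and the derivatives
grow at most geometrically with the order; hence this function is even. As `t ↦ d exp_P(tv)(tu)` is
a Jacobi field of this kind, the geodesic symmetry `exp_P v ↦ exp_P (-v)` preserves the metric. The
symmetry about the midpoint of the geodesic from `P` to `Q` then takes `P` to `Q`.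
-/

section DerivativeTower

variable {D : Type*} [NormedAddCommGroup D] [NormedSpace ℝ D]

theorem norm_le_pow_div_factorial_of_hasDerivAt_tower {h : ℕ → ℕ → ℝ → D} {M C T : ℝ}
    (hh : ∀ p q t, HasDerivAt (h p q) (h (p + 1) q t + h p (q + 1) t) t)
    (h0 : ∀ p q, h p q 0 = 0)
    (hb : ∀ p q, ∀ t ∈ Set.Icc 0 T, ‖h p q t‖ ≤ M * C ^ (p + q)) (k p q : ℕ) :
    ∀ t ∈ Set.Icc 0 T, ‖h p q t‖ ≤ M * C ^ (p + q) * ((2 * C * t) ^ k / k.factorial) := by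
  induction k generalizing p q with
  | zero => simpa using hb p q
  | succ k ih =>
    have hB (t : ℝ) : HasDerivAt
        (fun t => M * C ^ (p + q) * ((2 * C * t) ^ (k + 1) / (k + 1).factorial))
        (M * C ^ (p + q) * (2 * C) * ((2 * C * t) ^ k / k.factorial)) t := by
      refine ((((hasDerivAt_id t).const_mul (2 * C)).pow (k + 1)).div_const
        ((k + 1).factorial : ℝ) |>.const_mul (M * C ^ (p + q))).congr_deriv ?_
      simp only [Nat.factorial_succ, id, Nat.add_sub_cancel]
      push_cast
      field_simp
    have hderiv (t : ℝ) (ht : t ∈ Set.Ico 0 T) : ‖h (p + 1) q t + h p (q + 1) t‖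
        ≤ M * C ^ (p + q) * (2 * C) * ((2 * C * t) ^ k / k.factorial) := by
      have ht' : t ∈ Set.Icc 0 T := ⟨ht.1, ht.2.le⟩
      calc ‖h (p + 1) q t + h p (q + 1) t‖ ≤ ‖h (p + 1) q t‖ + ‖h p (q + 1) t‖ := norm_add_le _ _
        _ ≤ M * C ^ (p + 1 + q) * ((2 * C * t) ^ k / k.factorial)
            + M * C ^ (p + (q + 1)) * ((2 * C * t) ^ k / k.factorial) :=
          add_le_add (ih (p + 1) q t ht') (ih p (q + 1) t ht')
        _ = M * C ^ (p + q) * (2 * C) * ((2 * C * t) ^ k / k.factorial) := by ring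
    exact fun t ht => image_norm_le_of_norm_deriv_right_le_deriv_boundary
      (fun t _ => (hh p q t).continuousAt.continuousWithinAt)
      (fun t _ => (hh p q t).hasDerivWithinAt) (by simp [h0]) hB hderiv ht

theorem eq_zero_of_hasDerivAt_tower {h : ℕ → ℕ → ℝ → D} {M C T : ℝ}
    (hh : ∀ p q t, HasDerivAt (h p q) (h (p + 1) q t + h p (q + 1) t) t)
    (h0 : ∀ p q, h p q 0 = 0)
    (hb : ∀ p q, ∀ t ∈ Set.Icc 0 T, ‖h p q t‖ ≤ M * C ^ (p + q)) (p q : ℕ) {t : ℝ}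
    (ht : t ∈ Set.Icc 0 T) : h p q t = 0 := by
  have hlim := (FloorSemiring.tendsto_pow_div_factorial_atTop (2 * C * t)).const_mul
    (M * C ^ (p + q))
  rw [mul_zero] at hlim
  exact norm_le_zero_iff.1 <| ge_of_tendsto' hlim fun k =>
    norm_le_pow_div_factorial_of_hasDerivAt_tower hh h0 hb k p q t ht

/- The family `f p q t - (-1) ^ (p + q) • f p q (-t)` is again closed under differentiation, and
vanishes at the origin. -/
theorem apply_neg_of_hasDerivAt_tower {f : ℕ → ℕ → ℝ → D}
    (hf : ∀ p q t, HasDerivAt (f p q) (f (p + 1) q t + f p (q + 1) t) t)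
    (h0 : ∀ p q, Odd (p + q) → f p q 0 = 0)
    (hb : ∀ T, ∃ M C, ∀ p q, ∀ t ∈ Set.Icc (-T) T, ‖f p q t‖ ≤ M * C ^ (p + q))
    {t : ℝ} (ht : 0 ≤ t) : f 0 0 (-t) = f 0 0 t := by
  obtain ⟨M, C, hMC⟩ := hb t
  set h : ℕ → ℕ → ℝ → D := fun p q s => f p q s - (-1 : ℝ) ^ (p + q) • f p q (-s)
  have hh (p q s) : HasDerivAt (h p q) (h (p + 1) q s + h p (q + 1) s) s := by
    refine ((hf p q s).sub (((hf p q (-s)).scomp s (hasDerivAt_neg s)).const_smul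
      ((-1 : ℝ) ^ (p + q)))).congr_deriv ?_
    simp only [h]
    module
  have hh0 (p q) : h p q 0 = 0 := by
    rcases Nat.even_or_odd (p + q) with hpq | hpq
    · simp [h, hpq.neg_one_pow]
    · simp [h, h0 p q hpq]
  have hhb (p q) (s) (hs : s ∈ Set.Icc 0 t) : ‖h p q s‖ ≤ 2 * M * C ^ (p + q) := by
    have hpos := hMC p q s ⟨by linarith [hs.1], hs.2⟩
    have hneg := hMC p q (-s) ⟨by linarith [hs.2], by linarith [hs.1]⟩
    calc ‖h p q s‖ ≤ ‖f p q s‖ + ‖(-1 : ℝ) ^ (p + q) • f p q (-s)‖ := norm_sub_le _ _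
      _ = ‖f p q s‖ + ‖f p q (-s)‖ := by simp [norm_smul]
      _ ≤ 2 * M * C ^ (p + q) := by linarith
  have := eq_zero_of_hasDerivAt_tower hh hh0 hhb 0 0 ⟨ht, le_rfl⟩
  exact (sub_eq_zero.1 (by simpa [h] using this)).symm

end DerivativeTower

section AffineConnection

set_option maxSynthPendingDepth 3

variable {E F D : Type*} [NormedAddCommGroup E] [NormedSpace ℝ E]
  [NormedAddCommGroup F] [NormedSpace ℝ F] [NormedAddCommGroup D] [NormedSpace ℝ D]

/-- The curvature operator `R(a, b) c = (∇ₐ∇_b - ∇_b∇ₐ) c` of the affine connection on `E` with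
Christoffel map `Γ`; vector fields are functions `E → E`, and `∇ₐ V = ∂ₐ V + Γ(a, V)`. -/
noncomputable def curvatureMap (Γ : E → E →L[ℝ] E →L[ℝ] E) (z : E) :
    E →L[ℝ] E →L[ℝ] E →L[ℝ] E :=
  let A := fderiv ℝ Γ z + (ContinuousLinearMap.compL ℝ E E E).bilinearComp (Γ z) (Γ z)
  A - A.flip

/-- The covariant derivative `(∇_e R)(a, b) c` of the curvature operator. -/
noncomputable def nablaCurvature (Γ : E → E →L[ℝ] E →L[ℝ] E) (z e a b c : E) : E :=
  fderiv ℝ (curvatureMap Γ) z e a b c + Γ z e (curvatureMap Γ z a b c)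
    - curvatureMap Γ z (Γ z e a) b c - curvatureMap Γ z a (Γ z e b) c
    - curvatureMap Γ z a b (Γ z e c)

/-- The field of bilinear forms `G` satisfies `∇G = 0`; for a metric, this says that the connection
is metric. -/
def IsParallelForm (Γ : E → E →L[ℝ] E →L[ℝ] E) (G : E → E →L[ℝ] E →L[ℝ] ℝ) : Prop :=
  ∀ z e a b, fderiv ℝ G z e a b = G z (Γ z e a) b + G z a (Γ z e b)

/-- The covariant derivative of the vector field `V` along the map `c`, in the constant
direction `e` of the source of `c`. -/
noncomputable def covDerivAlong (Γ : E → E →L[ℝ] E →L[ℝ] E) (c V : F → E) (e x : F) : E :=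
  fderiv ℝ V x e + Γ (c x) (fderiv ℝ c x e) (V x)

/-- At time `t`, where the curve `γ` has velocity `v`, the vector field `V` along `γ` has covariant
derivative `V'`. -/
def HasCovDerivAt (Γ : E → E →L[ℝ] E →L[ℝ] E) (γ : ℝ → E) (v : E) (V : ℝ → E) (V' : E) (t : ℝ) :
    Prop :=
  HasDerivAt V (V' - Γ (γ t) v (V t)) t

/-- The curve `γ` is a geodesic, defined for all times, with velocity field `X`. -/
structure IsGeodesic (Γ : E → E →L[ℝ] E →L[ℝ] E) (γ X : ℝ → E) : Prop where
  hasDerivAt (t : ℝ) : HasDerivAt γ (X t) t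
  hasCovDerivAt (t : ℝ) : HasCovDerivAt Γ γ (X t) X 0 t

/-- `J` is a Jacobi field, with covariant derivative `Y`, along the curve `γ` with velocity
field `X`. -/
structure IsJacobiField (Γ : E → E →L[ℝ] E →L[ℝ] E) (γ X J Y : ℝ → E) : Prop where
  hasCovDerivAt (t : ℝ) : HasCovDerivAt Γ γ (X t) J (Y t) t
  hasCovDerivAt_covDeriv (t : ℝ) :
    HasCovDerivAt Γ γ (X t) Y (curvatureMap Γ (γ t) (X t) (J t) (X t)) t

variable {Γ : E → E →L[ℝ] E →L[ℝ] E} {G : E → E →L[ℝ] E →L[ℝ] ℝ}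

theorem curvatureMap_apply (Γ : E → E →L[ℝ] E →L[ℝ] E) (z a b c : E) :
    curvatureMap Γ z a b c = fderiv ℝ Γ z a b c - fderiv ℝ Γ z b a c
      + (Γ z a (Γ z b c) - Γ z b (Γ z a c)) := by
  simp only [curvatureMap, sub_apply, add_apply, ContinuousLinearMap.flip_apply,
    ContinuousLinearMap.bilinearComp_apply, ContinuousLinearMap.compL_apply,
    ContinuousLinearMap.comp_apply]
  abel

theorem fderiv_clm_apply_const {f : E → F →L[ℝ] D} {x : E} (hf : DifferentiableAt ℝ f x) (e : E)
    (v : F) : fderiv ℝ (fun y => f y v) x e = fderiv ℝ f x e v := by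
  simp [fderiv_clm_apply hf (differentiableAt_const v)]

theorem differentiable_curvatureMap (hΓ : ContDiff ℝ 2 Γ) :
    Differentiable ℝ (curvatureMap Γ) := by
  have hd : Differentiable ℝ Γ := hΓ.differentiable two_ne_zero
  have hcomp : Differentiable ℝ fun z =>
      (ContinuousLinearMap.compL ℝ E E E).bilinearComp (Γ z) (Γ z) := by
    have hleft : Differentiable ℝ fun z => (ContinuousLinearMap.compL ℝ E E E).comp (Γ z) :=
      (differentiable_const _).clm_comp hd
    exact (ContinuousLinearMap.flipₗᵢ ℝ _ _ _).differentiable.comp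
      (((ContinuousLinearMap.flipₗᵢ ℝ _ _ _).differentiable.comp hleft).clm_comp hd)
  have hsum : Differentiable ℝ fun z =>
      fderiv ℝ Γ z + (ContinuousLinearMap.compL ℝ E E E).bilinearComp (Γ z) (Γ z) :=
    ((hΓ.fderiv_right le_rfl).differentiable one_ne_zero).add hcomp
  exact hsum.sub ((ContinuousLinearMap.flipₗᵢ ℝ E E (E →L[ℝ] E)).differentiable.comp
    hsum)

theorem isLinearMap_nablaCurvature (Γ : E → E →L[ℝ] E →L[ℝ] E) (z e a b c : E) :
    IsLinearMap ℝ (fun e => nablaCurvature Γ z e a b c) ∧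
      IsLinearMap ℝ (fun a => nablaCurvature Γ z e a b c) ∧
      IsLinearMap ℝ (fun b => nablaCurvature Γ z e a b c) ∧
      IsLinearMap ℝ (fun c => nablaCurvature Γ z e a b c) := by
  refine ⟨?_, ?_, ?_, ?_⟩ <;> constructor <;> intros <;>
    simp only [nablaCurvature, map_add, add_apply, map_smul, smul_apply, smul_add, smul_sub] <;>
    abel

theorem IsParallelForm.fderiv_curvatureMap (hG : Differentiable ℝ G)
    (hpar : IsParallelForm Γ G) (hR : Differentiable ℝ (curvatureMap Γ)) (z e a b c d : E) :
    fderiv ℝ (fun w => G w (curvatureMap Γ w a b c) d) z e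
      = G z (nablaCurvature Γ z e a b c) d + G z (curvatureMap Γ z (Γ z e a) b c) d
        + G z (curvatureMap Γ z a (Γ z e b) c) d + G z (curvatureMap Γ z a b (Γ z e c)) d
        + G z (curvatureMap Γ z a b c) (Γ z e d) := by
  have hRd : HasFDerivAt (fun w => curvatureMap Γ w a b c) _ z :=
    (((hR z).hasFDerivAt.clm_apply (hasFDerivAt_const a z)).clm_apply
      (hasFDerivAt_const b z)).clm_apply (hasFDerivAt_const c z)
  have h : HasFDerivAt (fun w => G w (curvatureMap Γ w a b c) d) _ z :=
    ((hG z).hasFDerivAt.clm_apply hRd).clm_apply (hasFDerivAt_const d z)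
  rw [h.fderiv]
  simp only [ContinuousLinearMap.comp_zero, ContinuousLinearMap.flip_apply, add_apply,
    ContinuousLinearMap.comp_apply, zero_add, hpar z, nablaCurvature, map_add, map_sub, sub_apply]
  abel

theorem HasCovDerivAt.unique {γ V : ℝ → E} {v V' V'' : E} {t : ℝ}
    (h : HasCovDerivAt Γ γ v V V' t) (h' : HasCovDerivAt Γ γ v V V'' t) : V' = V'' :=
  sub_left_inj.1 (HasDerivAt.unique h h')

theorem HasCovDerivAt.hasDerivAt_form (hG : Differentiable ℝ G) (hpar : IsParallelForm Γ G)
    {γ V W : ℝ → E} {v V' W' : E} {t : ℝ} (hγ : HasDerivAt γ v t)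
    (hV : HasCovDerivAt Γ γ v V V' t) (hW : HasCovDerivAt Γ γ v W W' t) :
    HasDerivAt (fun s => G (γ s) (V s) (W s)) (G (γ t) V' (W t) + G (γ t) (V t) W') t := by
  have hGγ : HasDerivAt (fun s => G (γ s)) (fderiv ℝ G (γ t) v) t :=
    (hG (γ t)).hasFDerivAt.comp_hasDerivAt t hγ
  rw [HasCovDerivAt] at hV hW
  refine ((hGγ.clm_apply hV).clm_apply hW).congr_deriv ?_
  simp only [map_sub, sub_apply, add_apply, hpar (γ t)]
  abel

theorem HasCovDerivAt.curvatureMap (hR : Differentiable ℝ (curvatureMap Γ))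
    (hpar : ∀ z e a b c, nablaCurvature Γ z e a b c = 0)
    {γ U V W : ℝ → E} {v U' V' W' : E} {t : ℝ} (hγ : HasDerivAt γ v t)
    (hU : HasCovDerivAt Γ γ v U U' t) (hV : HasCovDerivAt Γ γ v V V' t)
    (hW : HasCovDerivAt Γ γ v W W' t) :
    HasCovDerivAt Γ γ v (fun s => curvatureMap Γ (γ s) (U s) (V s) (W s))
      (curvatureMap Γ (γ t) U' (V t) (W t) + curvatureMap Γ (γ t) (U t) V' (W t)
        + curvatureMap Γ (γ t) (U t) (V t) W') t := by
  have hRγ : HasDerivAt (fun s => _root_.curvatureMap Γ (γ s))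
      (fderiv ℝ (_root_.curvatureMap Γ) (γ t) v) t :=
    (hR (γ t)).hasFDerivAt.comp_hasDerivAt t hγ
  rw [HasCovDerivAt] at hU hV hW ⊢
  refine (((hRγ.clm_apply hU).clm_apply hV).clm_apply hW).congr_deriv ?_
  simp only [map_sub, sub_apply, add_apply]
  rw [← sub_eq_zero, ← hpar (γ t) v (U t) (V t) (W t), nablaCurvature]
  abel

theorem hasCovDerivAt_covDerivAlong {c V : F → E} (hV : Differentiable ℝ V) (x e : F) (t : ℝ) :
    HasCovDerivAt Γ (fun s => c (x + s • e)) (fderiv ℝ c (x + t • e) e) (fun s => V (x + s • e))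
      (covDerivAlong Γ c V e (x + t • e)) t := by
  have hline : HasDerivAt (fun s : ℝ => x + s • e) e t := by
    simpa using ((hasDerivAt_id t).smul_const e).const_add x
  refine ((hV _).hasFDerivAt.comp_hasDerivAt t hline).congr_deriv ?_
  simp [covDerivAlong]

theorem fderiv_fderiv_apply_comm {f : F → E} (hf : ContDiff ℝ 2 f) (e e' x : F) :
    fderiv ℝ (fun y => fderiv ℝ f y e) x e' = fderiv ℝ (fun y => fderiv ℝ f y e') x e := by
  have hd : DifferentiableAt ℝ (fderiv ℝ f) x :=
    (hf.fderiv_right le_rfl).differentiable one_ne_zero x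
  rw [fderiv_clm_apply_const hd, fderiv_clm_apply_const hd]
  exact hf.contDiffAt.isSymmSndFDerivAt (by simp) e' e

theorem covDerivAlong_fderiv_comm (hsymm : ∀ z a b, Γ z a b = Γ z b a) {c : F → E}
    (hc : ContDiff ℝ 2 c) (e e' x : F) :
    covDerivAlong Γ c (fun y => fderiv ℝ c y e) e' x
      = covDerivAlong Γ c (fun y => fderiv ℝ c y e') e x := by
  rw [covDerivAlong, covDerivAlong, fderiv_fderiv_apply_comm hc, hsymm]

theorem contDiff_fderiv_apply_const {f : F → E} {m n : WithTop ℕ∞} (hf : ContDiff ℝ n f)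
    (hmn : m + 1 ≤ n) (e : F) : ContDiff ℝ m fun x => fderiv ℝ f x e :=
  (hf.fderiv_right hmn).clm_apply contDiff_const

theorem contDiff_covDerivAlong (hΓ : ContDiff ℝ 1 Γ) {c V : F → E} (hc : ContDiff ℝ 2 c)
    (hV : ContDiff ℝ 2 V) (e : F) : ContDiff ℝ 1 (covDerivAlong Γ c V e) :=
  (contDiff_fderiv_apply_const hV le_rfl e).add
    (((hΓ.comp (hc.of_le one_le_two)).clm_apply (contDiff_fderiv_apply_const hc le_rfl e)).clm_apply
      (hV.of_le one_le_two))

theorem fderiv_covDerivAlong (hΓ : Differentiable ℝ Γ) {c V : F → E} (hc : ContDiff ℝ 2 c)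
    (hV : ContDiff ℝ 2 V) (e e' x : F) :
    fderiv ℝ (covDerivAlong Γ c V e) x e' = fderiv ℝ (fun y => fderiv ℝ V y e) x e'
      + (fderiv ℝ Γ (c x) (fderiv ℝ c x e') (fderiv ℝ c x e) (V x)
        + Γ (c x) (fderiv ℝ (fun y => fderiv ℝ c y e) x e') (V x)
        + Γ (c x) (fderiv ℝ c x e) (fderiv ℝ V x e')) := by
  have hcd := (hc.differentiable two_ne_zero x).hasFDerivAt
  have hVd := (hV.differentiable two_ne_zero x).hasFDerivAt
  have hc' := ((contDiff_fderiv_apply_const hc le_rfl e).differentiable one_ne_zero x).hasFDerivAt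
  have hV' := ((contDiff_fderiv_apply_const hV le_rfl e).differentiable one_ne_zero x).hasFDerivAt
  have h := hV'.add (((((hΓ (c x)).hasFDerivAt.comp x hcd).clm_apply hc')).clm_apply hVd)
  have : fderiv ℝ (covDerivAlong Γ c V e) x = _ := h.fderiv
  rw [this]
  simp only [Function.comp_apply, ContinuousLinearMap.flip_add, add_apply,
    ContinuousLinearMap.comp_apply, ContinuousLinearMap.flip_apply, add_right_inj]
  abel

theorem covDerivAlong_comm_sub (hΓ : Differentiable ℝ Γ) {c V : F → E} (hc : ContDiff ℝ 2 c)
    (hV : ContDiff ℝ 2 V) (e e' x : F) :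
    covDerivAlong Γ c (covDerivAlong Γ c V e') e x - covDerivAlong Γ c (covDerivAlong Γ c V e) e' x
      = curvatureMap Γ (c x) (fderiv ℝ c x e) (fderiv ℝ c x e') (V x) := by
  have hunfold (d d') : covDerivAlong Γ c (covDerivAlong Γ c V d) d' x
      = fderiv ℝ (covDerivAlong Γ c V d) x d'
        + Γ (c x) (fderiv ℝ c x d') (fderiv ℝ V x d + Γ (c x) (fderiv ℝ c x d) (V x)) := rfl
  rw [hunfold, hunfold, fderiv_covDerivAlong hΓ hc hV, fderiv_covDerivAlong hΓ hc hV,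
    fderiv_fderiv_apply_comm hV e', fderiv_fderiv_apply_comm hc e', curvatureMap_apply]
  simp only [map_add]
  abel

theorem isJacobiField_of_variation (hΓ : ContDiff ℝ 1 Γ) (hsymm : ∀ z a b, Γ z a b = Γ z b a)
    {c : F → E} (hc : ContDiff ℝ 3 c) {e : F}
    (hgeo : ∀ x, covDerivAlong Γ c (fun y => fderiv ℝ c y e) e x = 0) (e' x : F) :
    IsJacobiField Γ (fun t => c (x + t • e)) (fun t => fderiv ℝ c (x + t • e) e)
      (fun t => fderiv ℝ c (x + t • e) e')
      (fun t => covDerivAlong Γ c (fun y => fderiv ℝ c y e') e (x + t • e)) := by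
  have hc₂ : ContDiff ℝ 2 c := hc.of_le (by norm_num)
  have hc' (d : F) : ContDiff ℝ 2 fun y => fderiv ℝ c y d :=
    contDiff_fderiv_apply_const hc (by norm_num) d
  have hjacobi (y : F) : covDerivAlong Γ c (covDerivAlong Γ c (fun y => fderiv ℝ c y e') e) e y
      = curvatureMap Γ (c y) (fderiv ℝ c y e) (fderiv ℝ c y e') (fderiv ℝ c y e) := by
    have hgeo' : covDerivAlong Γ c (fun y => fderiv ℝ c y e) e = 0 := funext hgeo
    have htorsion : covDerivAlong Γ c (fun y => fderiv ℝ c y e') e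
        = covDerivAlong Γ c (fun y => fderiv ℝ c y e) e' :=
      funext fun y => covDerivAlong_fderiv_comm hsymm hc₂ e' e y
    rw [htorsion, ← covDerivAlong_comm_sub (hΓ.differentiable one_ne_zero) hc₂ (hc' e), hgeo']
    simp [covDerivAlong]
  refine ⟨fun t => hasCovDerivAt_covDerivAlong ((hc' e').differentiable two_ne_zero) x e t,
    fun t => ?_⟩
  rw [← hjacobi]
  exact hasCovDerivAt_covDerivAlong
    ((contDiff_covDerivAlong hΓ hc₂ (hc' e') e).differentiable one_ne_zero) x e t

/-- The iterated covariant derivatives `J, ∇J, ∇²J, …` of a Jacobi field `J` with covariant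
derivative `Y` along the geodesic `γ` with velocity field `X`, when the curvature operator is
parallel: then `∇ⁿ⁺²J = R(X, ∇ⁿJ) X`. -/
noncomputable def jacobiTower (Γ : E → E →L[ℝ] E →L[ℝ] E) (γ X J Y : ℝ → E) : ℕ → ℝ → E
  | 0 => J
  | 1 => Y
  | n + 2 => fun t => curvatureMap Γ (γ t) (X t) (jacobiTower Γ γ X J Y n t) (X t)

theorem IsJacobiField.hasCovDerivAt_jacobiTower (hR : Differentiable ℝ (curvatureMap Γ))
    (hpar : ∀ z e a b c, nablaCurvature Γ z e a b c = 0) {γ X J Y : ℝ → E}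
    (hγ : IsGeodesic Γ γ X) (hJ : IsJacobiField Γ γ X J Y) (n : ℕ) (t : ℝ) :
    HasCovDerivAt Γ γ (X t) (jacobiTower Γ γ X J Y n) (jacobiTower Γ γ X J Y (n + 1) t) t := by
  induction n using Nat.twoStepInduction with
  | zero => exact hJ.hasCovDerivAt t
  | one => exact hJ.hasCovDerivAt_covDeriv t
  | more n ih _ =>
    simpa only [jacobiTower, map_zero, zero_apply, zero_add, add_zero] using
      HasCovDerivAt.curvatureMap hR hpar (hγ.hasDerivAt t) (hγ.hasCovDerivAt t) ih
        (hγ.hasCovDerivAt t)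

theorem jacobiTower_zero_of_even {γ X J Y : ℝ → E} (hJ : J 0 = 0) {n : ℕ} (hn : Even n) :
    jacobiTower Γ γ X J Y n 0 = 0 := by
  obtain ⟨k, rfl⟩ := hn.two_dvd
  induction k with
  | zero => exact hJ
  | succ k ih => simp [Nat.mul_succ, jacobiTower, ih]

theorem norm_jacobiTower_le {γ X J Y : ℝ → E} {t N C : ℝ} (hC : 1 ≤ C)
    (hR : ‖(curvatureMap Γ (γ t) (X t)).flip (X t)‖ ≤ C) (hJ : ‖J t‖ ≤ N) (hY : ‖Y t‖ ≤ N)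
    (n : ℕ) : ‖jacobiTower Γ γ X J Y n t‖ ≤ N * C ^ n := by
  have hN : 0 ≤ N := (norm_nonneg _).trans hJ
  induction n using Nat.twoStepInduction with
  | zero => simpa [jacobiTower] using hJ
  | one => simpa [jacobiTower] using hY.trans (le_mul_of_one_le_right hN hC)
  | more n ih _ =>
    calc ‖jacobiTower Γ γ X J Y (n + 2) t‖
        ≤ ‖(curvatureMap Γ (γ t) (X t)).flip (X t)‖ * ‖jacobiTower Γ γ X J Y n t‖ :=
          ((curvatureMap Γ (γ t) (X t)).flip (X t)).le_opNorm _
      _ ≤ C * (N * C ^ n) := by gcongr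
      _ ≤ C * (N * C ^ n) * C := le_mul_of_one_le_right (by positivity) hC
      _ = N * C ^ (n + 2) := by ring

theorem exists_norm_form_jacobiTower_le (hG : Continuous G) (hR : Continuous (curvatureMap Γ))
    {γ X J₁ J₂ Y₁ Y₂ : ℝ → E} (hγ : Continuous γ) (hX : Continuous X) (hJ₁ : Continuous J₁)
    (hJ₂ : Continuous J₂) (hY₁ : Continuous Y₁) (hY₂ : Continuous Y₂) (T : ℝ) :
    ∃ M C, ∀ p q, ∀ t ∈ Set.Icc (-T) T,
      ‖G (γ t) (jacobiTower Γ γ X J₁ Y₁ p t) (jacobiTower Γ γ X J₂ Y₂ q t)‖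
        ≤ M * C ^ (p + q) := by
  have hbound {D : Type _} [NormedAddCommGroup D] {f : ℝ → D} (hf : Continuous f) :
      ∃ N, ∀ t ∈ Set.Icc (-T) T, ‖f t‖ ≤ N :=
    isCompact_Icc.exists_bound_of_continuousOn hf.continuousOn
  obtain ⟨B, hB⟩ := hbound (hG.comp hγ)
  obtain ⟨C, hC⟩ := hbound (((ContinuousLinearMap.flipₗᵢ ℝ E E E).continuous.comp
    ((hR.comp hγ).clm_apply hX)).clm_apply hX)
  obtain ⟨N₁, hN₁⟩ := hbound (hJ₁.prodMk hY₁)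
  obtain ⟨N₂, hN₂⟩ := hbound (hJ₂.prodMk hY₂)
  refine ⟨B * N₁ * N₂, max 1 C, fun p q t ht => ?_⟩
  have htower {J Y N} (hN : ‖(J t, Y t)‖ ≤ N) (n) :
      ‖jacobiTower Γ γ X J Y n t‖ ≤ N * max 1 C ^ n :=
    norm_jacobiTower_le (le_max_left _ _) ((hC t ht).trans (le_max_right _ _))
      ((norm_fst_le _).trans hN) ((norm_snd_le _).trans hN) n
  have hB₀ : 0 ≤ B := (norm_nonneg _).trans (hB t ht)
  have hN₀ : 0 ≤ N₁ := (norm_nonneg _).trans (hN₁ t ht)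
  calc _ ≤ ‖G (γ t)‖ * ‖jacobiTower Γ γ X J₁ Y₁ p t‖ * ‖jacobiTower Γ γ X J₂ Y₂ q t‖ :=
        (G (γ t)).le_opNorm₂ _ _
    _ ≤ B * (N₁ * max 1 C ^ p) * (N₂ * max 1 C ^ q) := by
        gcongr
        exacts [hB t ht, htower (hN₁ t ht) p, htower (hN₂ t ht) q]
    _ = B * N₁ * N₂ * max 1 C ^ (p + q) := by ring

theorem continuous_of_hasCovDerivAt {γ V V' : ℝ → E} {v : ℝ → E}
    (hV : ∀ t, HasCovDerivAt Γ γ (v t) V (V' t) t) : Continuous V :=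
  continuous_iff_continuousAt.2 fun t => HasDerivAt.continuousAt (hV t)

theorem IsGeodesic.continuous {γ X : ℝ → E} (hγ : IsGeodesic Γ γ X) : Continuous γ :=
  continuous_iff_continuousAt.2 fun t => (hγ.hasDerivAt t).continuousAt

theorem IsJacobiField.form_neg (hG : Differentiable ℝ G) (hGpar : IsParallelForm Γ G)
    (hR : Differentiable ℝ (curvatureMap Γ)) (hpar : ∀ z e a b c, nablaCurvature Γ z e a b c = 0)
    {γ X J₁ J₂ Y₁ Y₂ : ℝ → E} (hγ : IsGeodesic Γ γ X) (hJ₁ : IsJacobiField Γ γ X J₁ Y₁)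
    (hJ₂ : IsJacobiField Γ γ X J₂ Y₂) (h₁ : J₁ 0 = 0) (h₂ : J₂ 0 = 0) {t : ℝ} (ht : 0 ≤ t) :
    G (γ (-t)) (J₁ (-t)) (J₂ (-t)) = G (γ t) (J₁ t) (J₂ t) := by
  have hderiv (p q s) := HasCovDerivAt.hasDerivAt_form hG hGpar (hγ.hasDerivAt s)
    (hJ₁.hasCovDerivAt_jacobiTower hR hpar hγ p s) (hJ₂.hasCovDerivAt_jacobiTower hR hpar hγ q s)
  have hodd (p q) (hpq : Odd (p + q)) :
      G (γ 0) (jacobiTower Γ γ X J₁ Y₁ p 0) (jacobiTower Γ γ X J₂ Y₂ q 0) = 0 := by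
    rcases Nat.even_or_odd p with hp | hp
    · simp [jacobiTower_zero_of_even h₁ hp]
    · simp [jacobiTower_zero_of_even h₂ ((Nat.odd_add.1 hpq).1 hp)]
  exact apply_neg_of_hasDerivAt_tower hderiv hodd
    (exists_norm_form_jacobiTower_le hG.continuous hR.continuous hγ.continuous
      (continuous_of_hasCovDerivAt hγ.hasCovDerivAt) (continuous_of_hasCovDerivAt hJ₁.hasCovDerivAt)
      (continuous_of_hasCovDerivAt hJ₂.hasCovDerivAt)
      (continuous_of_hasCovDerivAt hJ₁.hasCovDerivAt_covDeriv)
      (continuous_of_hasCovDerivAt hJ₂.hasCovDerivAt_covDeriv)) ht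

theorem fderiv_comp_fst_smul_snd {f : E → E} (hf : Differentiable ℝ f) (t s : ℝ) (v u : E) :
    fderiv ℝ (fun p : ℝ × E => f (p.1 • p.2)) (t, v) (s, u)
      = fderiv ℝ f (t • v) (t • u + s • v) := by
  have hsmul : HasFDerivAt (fun p : ℝ × E => p.1 • p.2) _ (t, v) :=
    (hasFDerivAt_fst (𝕜 := ℝ) (p := (t, v))).smul hasFDerivAt_snd
  have h : HasFDerivAt (fun p : ℝ × E => f (p.1 • p.2)) _ (t, v) :=
    (hf (t • v)).hasFDerivAt.comp (t, v) hsmul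
  rw [h.fderiv]
  simp

theorem exists_isJacobiField_of_isGeodesic_rays (hΓ : ContDiff ℝ 1 Γ)
    (hsymm : ∀ z a b, Γ z a b = Γ z b a) {f : E → E} (hf : ContDiff ℝ 3 f)
    (hgeo : ∀ v, IsGeodesic Γ (fun t : ℝ => f (t • v)) fun t => fderiv ℝ f (t • v) v) (v u : E) :
    ∃ Y, IsJacobiField Γ (fun t : ℝ => f (t • v)) (fun t => fderiv ℝ f (t • v) v)
      (fun t => fderiv ℝ f (t • v) (t • u)) Y := by
  set c : ℝ × E → E := fun p => f (p.1 • p.2)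
  have hc : ContDiff ℝ 3 c := hf.comp (contDiff_fst.smul contDiff_snd)
  have hfd : Differentiable ℝ f := hf.differentiable three_ne_zero
  have hradial (p : ℝ × E) : fderiv ℝ c p (1, 0) = fderiv ℝ f (p.1 • p.2) p.2 := by
    simpa using fderiv_comp_fst_smul_snd hfd p.1 1 p.2 0
  have hangular (p : ℝ × E) : fderiv ℝ c p (0, u) = fderiv ℝ f (p.1 • p.2) (p.1 • u) := by
    simpa using fderiv_comp_fst_smul_snd hfd p.1 0 p.2 u
  have hline (w : E) (t : ℝ) : ((0, w) + t • (1, 0) : ℝ × E) = (t, w) := by simp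
  have hgeo' (p : ℝ × E) : covDerivAlong Γ c (fun y => fderiv ℝ c y (1, 0)) (1, 0) p = 0 := by
    have h := hasCovDerivAt_covDerivAlong (Γ := Γ) (c := c)
      ((contDiff_fderiv_apply_const hc (by norm_num : (2 : WithTop ℕ∞) + 1 ≤ 3)
        (1, 0)).differentiable two_ne_zero) (0, p.2) (1, 0) p.1
    simp only [hline, hradial] at h ⊢
    exact h.unique ((hgeo p.2).hasCovDerivAt p.1)
  have h := isJacobiField_of_variation hΓ hsymm hc hgeo' (0, u) (0, v)
  simp only [hline, hradial, hangular] at h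
  exact ⟨_, h⟩

theorem form_fderiv_neg_of_isGeodesic_rays (hΓ : ContDiff ℝ 2 Γ)
    (hsymm : ∀ z a b, Γ z a b = Γ z b a) (hG : Differentiable ℝ G) (hGpar : IsParallelForm Γ G)
    (hpar : ∀ z e a b c, nablaCurvature Γ z e a b c = 0) {f : E → E} (hf : ContDiff ℝ 3 f)
    (hgeo : ∀ v, IsGeodesic Γ (fun t : ℝ => f (t • v)) fun t => fderiv ℝ f (t • v) v)
    (v u₁ u₂ : E) :
    G (f (-v)) (fderiv ℝ f (-v) u₁) (fderiv ℝ f (-v) u₂)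
      = G (f v) (fderiv ℝ f v u₁) (fderiv ℝ f v u₂) := by
  have hJ := exists_isJacobiField_of_isGeodesic_rays (hΓ.of_le one_le_two) hsymm hf hgeo v
  obtain ⟨Y₁, hJ₁⟩ := hJ u₁
  obtain ⟨Y₂, hJ₂⟩ := hJ u₂
  simpa using IsJacobiField.form_neg hG hGpar (differentiable_curvatureMap hΓ) hpar (hgeo v)
    hJ₁ hJ₂ (by simp) (by simp) zero_le_one

/-- `f` is the exponential map at `P` of the connection with Christoffel map `Γ`. -/
structure IsExpMap (Γ : E → E →L[ℝ] E →L[ℝ] E) (P : E) (f : E → E) : Prop where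
  map_zero : f 0 = P
  fderiv_zero (v : E) : fderiv ℝ f 0 v = v
  isGeodesic (v : E) : IsGeodesic Γ (fun t : ℝ => f (t • v)) fun t => fderiv ℝ f (t • v) v

/-- The vector field on the tangent bundle `E × E` whose integral curves are the pairs `(γ, X)` of
a geodesic and its velocity field. -/
noncomputable def geodesicField (Γ : E → E →L[ℝ] E →L[ℝ] E) (p : E × E) : E × E :=
  (p.2, -Γ p.1 p.2 p.2)

theorem contDiff_geodesicField {n : WithTop ℕ∞} (hΓ : ContDiff ℝ n Γ) :
    ContDiff ℝ n (geodesicField Γ) :=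
  contDiff_snd.prodMk (((hΓ.comp contDiff_fst).clm_apply contDiff_snd).clm_apply contDiff_snd).neg

theorem IsGeodesic.isIntegralCurve_geodesicField {γ X : ℝ → E} (hγ : IsGeodesic Γ γ X) :
    IsIntegralCurve (fun t => (γ t, X t)) fun _ => geodesicField Γ := fun t => by
  have hX : HasDerivAt X (0 - Γ (γ t) (X t) (X t)) t := hγ.hasCovDerivAt t
  rw [zero_sub] at hX
  exact (hγ.hasDerivAt t).prodMk hX

theorem eq_of_isIntegralCurve_of_contDiff {f : F → F} (hf : ContDiff ℝ 1 f) {α β : ℝ → F}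
    (hα : IsIntegralCurve α fun _ => f) (hβ : IsIntegralCurve β fun _ => f) {t₀ : ℝ}
    (h₀ : α t₀ = β t₀) : α = β := by
  have hαc : Continuous α := continuous_iff_continuousAt.2 fun t => (hα t).continuousAt
  have hβc : Continuous β := continuous_iff_continuousAt.2 fun t => (hβ t).continuousAt
  have hclopen : IsClopen {t | α t = β t} := by
    refine ⟨isClosed_eq hαc hβc, isOpen_iff_mem_nhds.2 fun t (ht : α t = β t) => ?_⟩
    obtain ⟨K, s, hs, hK⟩ := (hf.contDiffAt (x := α t)).exists_lipschitzOnWith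
    exact ODE_solution_unique_of_eventually (v := fun _ => f) (s := fun _ => s)
      (.of_forall fun _ => hK)
      ((hαc.continuousAt.eventually hs).mono fun r hr => ⟨hα r, hr⟩)
      ((hβc.continuousAt.eventually (ht ▸ hs)).mono fun r hr => ⟨hβ r, hr⟩) ht
  funext t
  exact (hclopen.eq_univ ⟨t₀, h₀⟩).ge (Set.mem_univ t)

theorem IsExpMap.eq_of_isGeodesic (hΓ : ContDiff ℝ 1 Γ) {γ X : ℝ → E} (hγ : IsGeodesic Γ γ X)
    {f : E → E} (hf : IsExpMap Γ (γ 0) f) (t : ℝ) : γ t = f (t • X 0) := by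
  have h := eq_of_isIntegralCurve_of_contDiff (contDiff_geodesicField hΓ)
    hγ.isIntegralCurve_geodesicField (hf.isGeodesic (X 0)).isIntegralCurve_geodesicField
    (t₀ := 0) (by simp [hf.map_zero, hf.fderiv_zero])
  exact congrArg Prod.fst (congrFun h t)

theorem IsGeodesic.comp_add_const {γ X : ℝ → E} (hγ : IsGeodesic Γ γ X) (a : ℝ) :
    IsGeodesic Γ (fun t => γ (t + a)) fun t => X (t + a) where
  hasDerivAt t := (hγ.hasDerivAt (t + a)).comp_add_const t a
  hasCovDerivAt t := HasDerivAt.comp_add_const t a (hγ.hasCovDerivAt (t + a))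

/-- The geodesic symmetry `Q ↦ f (-f⁻¹ Q)` at a point with exponential map `f`. -/
def geodesicSymm (f : E ≃ E) : E ≃ E :=
  (f.symm.trans (Equiv.neg E)).trans f

/-- The map `φ` preserves the field of bilinear forms `G`; for a metric `G`, this says that `φ` is
a local isometry. -/
def PreservesForm (G : E → E →L[ℝ] E →L[ℝ] ℝ) (φ : E → E) : Prop :=
  ∀ z u v, G (φ z) (fderiv ℝ φ z u) (fderiv ℝ φ z v) = G z u v

theorem preservesForm_geodesicSymm {f : E ≃ E} (hf : Differentiable ℝ f)
    (hf' : Differentiable ℝ f.symm)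
    (heven : ∀ v u₁ u₂, G (f (-v)) (fderiv ℝ f (-v) u₁) (fderiv ℝ f (-v) u₂)
      = G (f v) (fderiv ℝ f v u₁) (fderiv ℝ f v u₂)) :
    PreservesForm G (geodesicSymm f) := by
  intro z u v
  have hsymm := (hf' z).hasFDerivAt
  have hφ : HasFDerivAt (fun z => f (-f.symm z)) _ z :=
    (hf (-f.symm z)).hasFDerivAt.comp z hsymm.fun_neg
  have hφd : fderiv ℝ (geodesicSymm f) z = _ := hφ.fderiv
  have hid : (fderiv ℝ f (f.symm z)).comp (fderiv ℝ f.symm z) = .id ℝ E := by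
    refine ((hf (f.symm z)).hasFDerivAt.comp z hsymm).unique ?_
    rw [f.self_comp_symm]
    exact hasFDerivAt_id z
  have hright (w : E) : fderiv ℝ f (f.symm z) (fderiv ℝ f.symm z w) = w := DFunLike.congr_fun hid w
  rw [hφd]
  simpa [geodesicSymm, hright] using
    heven (f.symm z) (fderiv ℝ f.symm z u) (fderiv ℝ f.symm z v)

theorem geodesicSymm_apply_of_isGeodesic (hΓ : ContDiff ℝ 1 Γ) {γ X : ℝ → E}
    (hγ : IsGeodesic Γ γ X) {f : E ≃ E} (hf : IsExpMap Γ (γ 0) f) (t : ℝ) :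
    geodesicSymm f (γ t) = γ (-t) := by
  rw [hf.eq_of_isGeodesic hΓ hγ, hf.eq_of_isGeodesic hΓ hγ, neg_smul]
  simp [geodesicSymm]

theorem exists_geodesicSymm_apply_eq (hΓ : ContDiff ℝ 1 Γ) {exp : E → E ≃ E}
    (hexp : ∀ P, IsExpMap Γ P (exp P)) (P Q : E) : ∃ O, geodesicSymm (exp O) P = Q := by
  set v := (exp P).symm Q
  set γ : ℝ → E := fun s => exp P ((s + 1 / 2) • v)
  have hγ : IsGeodesic Γ γ _ := ((hexp P).isGeodesic v).comp_add_const (1 / 2)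
  have hP : γ (-(1 / 2)) = P := by simp [γ, (hexp P).map_zero]
  have hQ : γ (1 / 2) = Q := by norm_num [γ, v]
  refine ⟨γ 0, ?_⟩
  rw [← hP, geodesicSymm_apply_of_isGeodesic hΓ hγ (hexp (γ 0)), neg_neg, hQ]

theorem stmt16_general (hΓ : ContDiff ℝ 2 Γ) (hsymm : ∀ z a b, Γ z a b = Γ z b a)
    (hG : Differentiable ℝ G) (hGpar : IsParallelForm Γ G)
    (hpar : ∀ z e a b c, nablaCurvature Γ z e a b c = 0) {exp : E → E ≃ E}
    (hexp : ∀ P, IsExpMap Γ P (exp P)) {n : WithTop ℕ∞} (hn : 3 ≤ n)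
    (hsmooth : ∀ P, ContDiff ℝ n (exp P)) (hsmooth' : ∀ P, ContDiff ℝ n (exp P).symm) (P Q : E) :
    ∃ φ : E ≃ E, ContDiff ℝ n φ ∧ PreservesForm G φ ∧ φ P = Q := by
  obtain ⟨O, hO⟩ := exists_geodesicSymm_apply_eq (hΓ.of_le one_le_two) hexp P Q
  have hn₀ : n ≠ 0 := (zero_lt_three.trans_le hn).ne'
  refine ⟨geodesicSymm (exp O), (hsmooth O).comp (hsmooth' O).neg, ?_, hO⟩
  exact preservesForm_geodesicSymm ((hsmooth O).differentiable hn₀)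
    ((hsmooth' O).differentiable hn₀)
    (form_fderiv_neg_of_isGeodesic_rays hΓ hsymm hG hGpar hpar ((hsmooth O).of_le hn)
      (hexp O).isGeodesic)

end AffineConnection

section Coordinates

set_option maxSynthPendingDepth 3

theorem eq_of_isLinearMap_of_single {ι D : Type*} [Finite ι] [DecidableEq ι] [AddCommGroup D]
    [Module ℝ D] {f₁ f₂ : (ι → ℝ) → D} (h₁ : IsLinearMap ℝ f₁) (h₂ : IsLinearMap ℝ f₂)
    (h : ∀ a, f₁ (Pi.single a 1) = f₂ (Pi.single a 1)) (v : ι → ℝ) : f₁ v = f₂ v := by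
  have : h₁.mk' f₁ = h₂.mk' f₂ :=
    LinearMap.pi_ext' fun a => LinearMap.ext_ring (by simpa using h a)
  exact LinearMap.congr_fun this v

theorem christoffelFst_comm {ι : Type*} [DecidableEq ι] {g : (ι → ℝ) → Matrix ι ι ℝ}
    (hgsym : ∀ z a b, g z a b = g z b a) (a b c : ι) (z : ι → ℝ) :
    christoffelFst g a b c z = christoffelFst g b a c z := by
  simp only [christoffelFst, hgsym _ a b]
  ring

theorem pd_metric {ι : Type*} [DecidableEq ι] {g : (ι → ℝ) → Matrix ι ι ℝ}
    (hgsym : ∀ z a b, g z a b = g z b a) (a b c : ι) (z : ι → ℝ) :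
    pd c (fun w => g w a b) z = christoffelFst g c a b z + christoffelFst g c b a z := by
  simp only [christoffelFst, hgsym _ b a]
  ring

variable {ι D E : Type*} [Fintype ι] [NormedAddCommGroup D] [NormedSpace ℝ D]
  [NormedAddCommGroup E] [NormedSpace ℝ E] {m n : WithTop ℕ∞}

/-- The bilinear map on `ℝ^ι` with the values `k a b` on the pairs of standard basis vectors. -/
noncomputable def bilinOfCoeff (k : ι → ι → D) : (ι → ℝ) →L[ℝ] (ι → ℝ) →L[ℝ] D :=
  ∑ a, ∑ b, (ContinuousLinearMap.proj a : (ι → ℝ) →L[ℝ] ℝ).smulRight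
    ((ContinuousLinearMap.proj b : (ι → ℝ) →L[ℝ] ℝ).smulRight (k a b))

theorem bilinOfCoeff_apply (k : ι → ι → D) (u v : ι → ℝ) :
    bilinOfCoeff k u v = ∑ a, ∑ b, u a • v b • k a b := by
  simp [bilinOfCoeff]

theorem bilinOfCoeff_comm {k : ι → ι → D} (hk : ∀ a b, k a b = k b a) (u v : ι → ℝ) :
    bilinOfCoeff k u v = bilinOfCoeff k v u := by
  rw [bilinOfCoeff_apply, bilinOfCoeff_apply, Finset.sum_comm]
  refine Finset.sum_congr rfl fun a _ => Finset.sum_congr rfl fun b _ => ?_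
  rw [hk b a, smul_comm]

theorem contDiff_bilinOfCoeff {k : ι → ι → E → D} (hk : ∀ a b, ContDiff ℝ n (k a b)) :
    ContDiff ℝ n fun z => bilinOfCoeff fun a b => k a b z :=
  ContDiff.sum fun a _ => ContDiff.sum fun b _ =>
    contDiff_const.smulRight (contDiff_const.smulRight (hk a b))

/-- The metric with components `g`, as a field of bilinear forms. -/
noncomputable def metricMap (g : (ι → ℝ) → Matrix ι ι ℝ) (z : ι → ℝ) :
    (ι → ℝ) →L[ℝ] (ι → ℝ) →L[ℝ] ℝ :=
  bilinOfCoeff fun a b => g z a b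

theorem metricMap_apply (g : (ι → ℝ) → Matrix ι ι ℝ) (z u v : ι → ℝ) :
    metricMap g z u v = ∑ a, ∑ b, g z a b * u a * v b := by
  rw [metricMap, bilinOfCoeff_apply]
  refine Finset.sum_congr rfl fun a _ => Finset.sum_congr rfl fun b _ => ?_
  simp only [smul_eq_mul]
  ring

theorem metricMap_comm {g : (ι → ℝ) → Matrix ι ι ℝ} (hgsym : ∀ z a b, g z a b = g z b a)
    (z u v : ι → ℝ) : metricMap g z u v = metricMap g z v u :=
  bilinOfCoeff_comm (hgsym z) u v

variable [DecidableEq ι]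

theorem bilinOfCoeff_single (k : ι → ι → D) (a b : ι) :
    bilinOfCoeff k (Pi.single a 1) (Pi.single b 1) = k a b := by
  simp [bilinOfCoeff_apply, Pi.single_apply]

theorem contDiff_det {A : E → Matrix ι ι ℝ} (hA : ∀ a b, ContDiff ℝ n fun z => A z a b) :
    ContDiff ℝ n fun z => (A z).det := by
  simp only [Matrix.det_apply]
  exact ContDiff.sum fun σ _ => (contDiff_prod fun i _ => hA _ _).const_smul _

theorem contDiff_nonsing_inv_apply {A : E → Matrix ι ι ℝ}
    (hA : ∀ a b, ContDiff ℝ n fun z => A z a b) (hu : ∀ z, IsUnit (A z)) (a b : ι) :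
    ContDiff ℝ n fun z => (A z)⁻¹ a b := by
  have hdet (z) : (A z).det ≠ 0 := ((Matrix.isUnit_iff_isUnit_det _).1 (hu z)).ne_zero
  simp only [Matrix.inv_def, Matrix.smul_apply, Ring.inverse_eq_inv', smul_eq_mul,
    Matrix.adjugate_apply]
  refine ((contDiff_det hA).inv hdet).mul (contDiff_det fun i j => ?_)
  by_cases hi : i = b
  · subst hi
    simpa using contDiff_const
  · simpa [Matrix.updateRow_apply, hi] using hA i j

variable {g : (ι → ℝ) → Matrix ι ι ℝ}

theorem metricMap_single (g : (ι → ℝ) → Matrix ι ι ℝ) (z : ι → ℝ) (a b : ι) :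
    metricMap g z (Pi.single a 1) (Pi.single b 1) = g z a b :=
  bilinOfCoeff_single _ a b

theorem metricMap_single_right (g : (ι → ℝ) → Matrix ι ι ℝ) (z v : ι → ℝ) (d : ι) :
    metricMap g z v (Pi.single d 1) = ∑ f, v f * g z f d := by
  simp [metricMap, bilinOfCoeff_apply, Pi.single_apply]

theorem eq_zero_of_metricMap_single_right {z v : ι → ℝ} (hu : IsUnit (g z))
    (hv : ∀ d, metricMap g z v (Pi.single d 1) = 0) : v = 0 := by
  refine Matrix.vecMul_injective_of_isUnit hu (funext fun d => ?_)
  simpa [metricMap_single_right, Matrix.vecMul, dotProduct] using hv d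

theorem contDiff_christoffelFst (hg : ∀ a b, ContDiff ℝ n fun z => g z a b) (hmn : m + 1 ≤ n)
    (a b c : ι) : ContDiff ℝ m (christoffelFst g a b c) := by
  have hpd (a b c) : ContDiff ℝ m (pd c fun z => g z a b) :=
    contDiff_fderiv_apply_const (hg a b) hmn _
  exact (((hpd b c a).add (hpd a c b)).sub (hpd a b c)).div_const _

theorem contDiff_christoffelSnd (hg : ∀ a b, ContDiff ℝ n fun z => g z a b) (hmn : m + 1 ≤ n)
    (hu : ∀ z, IsUnit (g z)) (a b c : ι) : ContDiff ℝ m (christoffelSnd g a b c) :=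
  ContDiff.sum fun d _ => (contDiff_nonsing_inv_apply
    (fun a b => (hg a b).of_le (le_self_add.trans hmn)) hu c d).mul
      (contDiff_christoffelFst hg hmn a b d)

theorem sum_christoffelSnd_mul (hgsym : ∀ z a b, g z a b = g z b a) (hu : ∀ z, IsUnit (g z))
    (a b c : ι) (z : ι → ℝ) :
    ∑ f, christoffelSnd g a b f z * g z f c = christoffelFst g a b c z := by
  have h : (g z).mulVec ((g z)⁻¹.mulVec fun d => christoffelFst g a b d z)
      = fun d => christoffelFst g a b d z := by
    rw [Matrix.mulVec_mulVec, Matrix.mul_nonsing_inv _ ((Matrix.isUnit_iff_isUnit_det _).1 (hu z)),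
      Matrix.one_mulVec]
  simp_rw [hgsym z _ c, mul_comm _ (g z c _)]
  exact congrFun h c

/-- The Levi-Civita connection of the metric with components `g`, as a field of bilinear maps. -/
noncomputable def christoffelMap (g : (ι → ℝ) → Matrix ι ι ℝ) (z : ι → ℝ) :
    (ι → ℝ) →L[ℝ] (ι → ℝ) →L[ℝ] (ι → ℝ) :=
  bilinOfCoeff fun a b c => christoffelSnd g a b c z

theorem christoffelMap_single (g : (ι → ℝ) → Matrix ι ι ℝ) (z : ι → ℝ) (a b : ι) :
    christoffelMap g z (Pi.single a 1) (Pi.single b 1) = fun c => christoffelSnd g a b c z :=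
  bilinOfCoeff_single _ a b

theorem christoffelMap_single_eq_sum (g : (ι → ℝ) → Matrix ι ι ℝ) (z : ι → ℝ) (a b : ι) :
    christoffelMap g z (Pi.single a 1) (Pi.single b 1)
      = ∑ f, christoffelSnd g a b f z • Pi.single f 1 := by
  rw [christoffelMap_single]
  exact pi_eq_sum_univ' _

theorem christoffelMap_comm (hgsym : ∀ z a b, g z a b = g z b a) (z u v : ι → ℝ) :
    christoffelMap g z u v = christoffelMap g z v u := by
  refine bilinOfCoeff_comm (fun a b => funext fun c => ?_) u v
  simp only [christoffelSnd, christoffelFst_comm hgsym a b]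

theorem contDiff_christoffelMap (hg : ∀ a b, ContDiff ℝ n fun z => g z a b) (hmn : m + 1 ≤ n)
    (hu : ∀ z, IsUnit (g z)) : ContDiff ℝ m (christoffelMap g) :=
  contDiff_bilinOfCoeff fun a b => contDiff_pi.2 fun c => contDiff_christoffelSnd hg hmn hu a b c

theorem isParallelForm_of_single {Γ : (ι → ℝ) → (ι → ℝ) →L[ℝ] (ι → ℝ) →L[ℝ] (ι → ℝ)}
    {G : (ι → ℝ) → (ι → ℝ) →L[ℝ] (ι → ℝ) →L[ℝ] ℝ}
    (h : ∀ z e a b, fderiv ℝ G z (Pi.single e 1) (Pi.single a 1) (Pi.single b 1)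
      = G z (Γ z (Pi.single e 1) (Pi.single a 1)) (Pi.single b 1)
        + G z (Pi.single a 1) (Γ z (Pi.single e 1) (Pi.single b 1))) : IsParallelForm Γ G := by
  intro z e a b
  have hleft : IsLinearMap ℝ (fun e => fderiv ℝ G z e a b) ∧
      (∀ e, IsLinearMap ℝ fun a => fderiv ℝ G z e a b) ∧
      ∀ e a, IsLinearMap ℝ fun b => fderiv ℝ G z e a b := by
    refine ⟨?_, fun _ => ?_, fun _ _ => ?_⟩ <;> constructor <;> simp
  have hright : IsLinearMap ℝ (fun e => G z (Γ z e a) b + G z a (Γ z e b)) ∧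
      (∀ e, IsLinearMap ℝ fun a => G z (Γ z e a) b + G z a (Γ z e b)) ∧
      ∀ e a, IsLinearMap ℝ fun b => G z (Γ z e a) b + G z a (Γ z e b) := by
    refine ⟨?_, fun _ => ?_, fun _ _ => ?_⟩ <;> constructor <;> intros <;>
      simp only [map_add, map_smul, add_apply, smul_apply, smul_eq_mul] <;> ring
  refine eq_of_isLinearMap_of_single hleft.1 hright.1 (fun e' => ?_) e
  refine eq_of_isLinearMap_of_single (hleft.2.1 _) (hright.2.1 _) (fun a' => ?_) a
  exact eq_of_isLinearMap_of_single (hleft.2.2 _ _) (hright.2.2 _ _) (h z e' a') b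

theorem isParallelForm_metricMap (hgsym : ∀ z a b, g z a b = g z b a) (hu : ∀ z, IsUnit (g z))
    (hG : Differentiable ℝ (metricMap g)) : IsParallelForm (christoffelMap g) (metricMap g) := by
  refine isParallelForm_of_single fun z e a b => ?_
  rw [← fderiv_clm_apply_const (hG z), ← fderiv_clm_apply_const
    ((hG z).clm_apply (differentiableAt_const _)), metricMap_comm hgsym z (Pi.single a 1)]
  simp only [metricMap_single]
  simp only [metricMap_single_right, christoffelMap_single, sum_christoffelSnd_mul hgsym hu]
  exact pd_metric hgsym a b e z

theorem curvatureMap_christoffelMap_single (hΓ : Differentiable ℝ (christoffelMap g)) (z : ι → ℝ)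
    (a b c : ι) :
    curvatureMap (christoffelMap g) z (Pi.single a 1) (Pi.single b 1) (Pi.single c 1)
      = fun e => curvU g a b c e z := by
  have hpd (a b c e : ι) : fderiv ℝ (christoffelMap g) z (Pi.single a 1) (Pi.single b 1)
      (Pi.single c 1) e = pd a (christoffelSnd g b c e) z := by
    have hΓb : DifferentiableAt ℝ (fun w => christoffelMap g w (Pi.single b 1)) z :=
      (hΓ z).clm_apply (differentiableAt_const _)
    rw [← fderiv_clm_apply_const (hΓ z), ← fderiv_clm_apply_const hΓb,
      fderiv_pi (differentiableAt_pi.1 (hΓb.clm_apply (differentiableAt_const _)))]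
    simp only [christoffelMap_single]
    rfl
  have hΓΓ (a b c e : ι) :
      christoffelMap g z (Pi.single a 1) (christoffelMap g z (Pi.single b 1) (Pi.single c 1)) e
        = ∑ f, christoffelSnd g b c f z * christoffelSnd g a f e z := by
    rw [christoffelMap_single_eq_sum g z b c]
    simp [christoffelMap_single]
  funext e
  simp only [curvatureMap_apply, Pi.add_apply, Pi.sub_apply, hpd, hΓΓ, curvU,
    Finset.sum_sub_distrib]

theorem metricMap_curvatureMap_single (hΓ : Differentiable ℝ (christoffelMap g)) (z : ι → ℝ)
    (a b c d : ι) :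
    metricMap g z (curvatureMap (christoffelMap g) z (Pi.single a 1) (Pi.single b 1)
      (Pi.single c 1)) (Pi.single d 1) = curv g a b c d z := by
  rw [curvatureMap_christoffelMap_single hΓ, metricMap_single_right, curv]

theorem metricMap_nablaCurvature_single (hΓ : ContDiff ℝ 2 (christoffelMap g))
    (hG : Differentiable ℝ (metricMap g)) (hGpar : IsParallelForm (christoffelMap g) (metricMap g))
    (z : ι → ℝ) (a b c d e : ι) :
    metricMap g z (nablaCurvature (christoffelMap g) z (Pi.single e 1) (Pi.single a 1)
      (Pi.single b 1) (Pi.single c 1)) (Pi.single d 1) = curvCov g a b c d e z := by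
  have hcurv := metricMap_curvatureMap_single (hΓ.differentiable two_ne_zero)
  have h := hGpar.fderiv_curvatureMap hG (differentiable_curvatureMap hΓ) z (Pi.single e 1)
    (Pi.single a 1) (Pi.single b 1) (Pi.single c 1) (Pi.single d 1)
  simp only [hcurv, christoffelMap_single_eq_sum, map_sum, map_smul, sum_apply, smul_apply,
    smul_eq_mul] at h
  rw [curvCov, pd, h]
  ring

theorem nablaCurvature_eq_zero_of_single {Γ : (ι → ℝ) → (ι → ℝ) →L[ℝ] (ι → ℝ) →L[ℝ] (ι → ℝ)}
    {z : ι → ℝ} (h : ∀ e a b c, nablaCurvature Γ z (Pi.single e 1) (Pi.single a 1)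
      (Pi.single b 1) (Pi.single c 1) = 0) (e a b c : ι → ℝ) : nablaCurvature Γ z e a b c = 0 := by
  have hzero : IsLinearMap ℝ fun _ : ι → ℝ => (0 : ι → ℝ) := LinearMap.isLinear 0
  have hlin := isLinearMap_nablaCurvature Γ z
  exact eq_of_isLinearMap_of_single (hlin e a b c).1 hzero (fun e' =>
    eq_of_isLinearMap_of_single (hlin _ a b c).2.1 hzero (fun a' =>
    eq_of_isLinearMap_of_single (hlin _ _ b c).2.2.1 hzero (fun b' =>
    eq_of_isLinearMap_of_single (hlin _ _ _ c).2.2.2 hzero (h e' a' b') c) b) a) e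

theorem nablaCurvature_christoffelMap_eq_zero (hgsym : ∀ z a b, g z a b = g z b a)
    (hu : ∀ z, IsUnit (g z)) (hΓ : ContDiff ℝ 2 (christoffelMap g))
    (hG : Differentiable ℝ (metricMap g)) (hflat : ∀ a b c d e z, curvCov g a b c d e z = 0)
    (z e a b c : ι → ℝ) : nablaCurvature (christoffelMap g) z e a b c = 0 := by
  refine nablaCurvature_eq_zero_of_single (fun e a b c => ?_) e a b c
  refine eq_zero_of_metricMap_single_right (hu z) fun d => ?_
  rw [metricMap_nablaCurvature_single hΓ hG (isParallelForm_metricMap hgsym hu hG), hflat]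

theorem isGeodesic_christoffelMap {γ X : ℝ → ι → ℝ} (hγ : ∀ t, HasDerivAt γ (X t) t)
    (hX : ∀ c t, HasDerivAt (fun s => X s c)
      (-∑ a, ∑ b, X t a * X t b * christoffelSnd g a b c (γ t)) t) :
    IsGeodesic (christoffelMap g) γ X where
  hasDerivAt := hγ
  hasCovDerivAt t := hasDerivAt_pi.2 fun c => by
    simpa [christoffelMap, bilinOfCoeff_apply, mul_assoc] using hX c t

theorem isExpMap_christoffelMap {P : ι → ℝ} {f : (ι → ℝ) → ι → ℝ} (hf : Differentiable ℝ f)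
    (h0 : f 0 = P)
    (hgeo : ∀ v c t, HasDerivAt (deriv fun s : ℝ => f (s • v) c)
      (-(∑ a, ∑ b, deriv (fun s : ℝ => f (s • v) a) t * deriv (fun s : ℝ => f (s • v) b) t
          * christoffelSnd g a b c (f (t • v)))) t)
    (hvel : ∀ v c, deriv (fun s : ℝ => f (s • v) c) 0 = v c) :
    IsExpMap (christoffelMap g) P f := by
  have hray (v : ι → ℝ) (t : ℝ) : HasDerivAt (fun s : ℝ => f (s • v)) (fderiv ℝ f (t • v) v) t :=
    (hf _).hasFDerivAt.comp_hasDerivAt t (by simpa using (hasDerivAt_id t).smul_const v)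
  have hderiv (v : ι → ℝ) (c : ι) :
      (deriv fun s : ℝ => f (s • v) c) = fun t => fderiv ℝ f (t • v) v c :=
    funext fun t => (hasDerivAt_pi.1 (hray v t) c).deriv
  simp only [hderiv] at hgeo hvel
  exact ⟨h0, fun v => by simpa using funext (hvel v),
    fun v => isGeodesic_christoffelMap (hray v) (hgeo v)⟩

end Coordinates

/-- Theorem 1.8: let `(ℝ^ι, g)` be a pseudo-Riemannian manifold (in global coordinates) with
parallel curvature tensor `∇R = 0` and such that the exponential map `exp_P` is a diffeomorphism
for every point `P`.  Then for any two points `P, Q` there is an isometry of the manifold taking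
`P` to `Q`; hence the manifold is homogeneous. -/
theorem stmt16 {ι : Type*} [Fintype ι] [DecidableEq ι]
    (g : (ι → ℝ) → Matrix ι ι ℝ)
    (hgsym : ∀ z a b, g z a b = g z b a)
    (hginv : ∀ z, IsUnit (g z))
    (hgsm : ∀ a b, ContDiff ℝ (⊤ : ℕ∞) (fun z => g z a b))
    (hflat : ∀ (a b c d e : ι) (z : ι → ℝ), curvCov g a b c d e z = 0)
    (expm : (ι → ℝ) → (ι → ℝ) → (ι → ℝ))
    -- for each `P` and `v`, `t ↦ expm P (t • v)` is the geodesic with `γ(0) = P`, `γ̇(0) = v`: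
    (hexp0 : ∀ P, expm P 0 = P)
    (hexpdiff : ∀ P v c t, DifferentiableAt ℝ (fun s : ℝ => expm P (s • v) c) t)
    (hexpgeo : ∀ P v c t, HasDerivAt (deriv fun s : ℝ => expm P (s • v) c)
      (-(∑ a, ∑ b, deriv (fun s : ℝ => expm P (s • v) a) t
          * deriv (fun s : ℝ => expm P (s • v) b) t
          * christoffelSnd g a b c (expm P (t • v)))) t)
    (hexpvel : ∀ P v c, deriv (fun s : ℝ => expm P (s • v) c) 0 = v c)
    -- each `exp_P` is a diffeomorphism:
    (hexpsm : ∀ P, ContDiff ℝ (⊤ : ℕ∞) (expm P))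
    (hexpinv : ∀ P, ∃ ψ : (ι → ℝ) → (ι → ℝ), ContDiff ℝ (⊤ : ℕ∞) ψ ∧
      Function.LeftInverse ψ (expm P) ∧ Function.RightInverse ψ (expm P)) :
    ∀ P Q : ι → ℝ, ∃ φ : (ι → ℝ) → (ι → ℝ),
      ContDiff ℝ (⊤ : ℕ∞) φ ∧ Function.Bijective φ ∧
      (∀ (z : ι → ℝ) (u v : ι → ℝ),
        (∑ a, ∑ b, g (φ z) a b * fderiv ℝ φ z u a * fderiv ℝ φ z v b)
          = ∑ a, ∑ b, g z a b * u a * v b) ∧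
      φ P = Q := by
  intro P Q
  have hn : (3 : WithTop ℕ∞) ≤ (⊤ : ℕ∞) := ENat.LEInfty.out
  have hΓ : ContDiff ℝ 2 (christoffelMap g) :=
    contDiff_christoffelMap hgsm (two_add_one_eq_three.trans_le hn) hginv
  have hG : Differentiable ℝ (metricMap g) := (contDiff_bilinOfCoeff hgsm).differentiable (by simp)
  have hexp (P) : IsExpMap (christoffelMap g) P (expm P) := isExpMap_christoffelMap
    ((hexpsm P).differentiable (by simp)) (hexp0 P) (hexpgeo P) (hexpvel P)
  choose ψ hψ hleft hright using hexpinv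
  obtain ⟨φ, hφ, hφG, hφPQ⟩ := stmt16_general hΓ (christoffelMap_comm hgsym) hG
    (isParallelForm_metricMap hgsym hginv hG)
    (nablaCurvature_christoffelMap_eq_zero hgsym hginv hΓ hG hflat)
    (exp := fun P => ⟨expm P, ψ P, hleft P, hright P⟩) hexp hn hexpsm hψ P Q
  exact ⟨φ, hφ, φ.bijective, fun z u v => by simpa only [metricMap_apply] using hφG z u v, hφPQ⟩
end
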